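/- Let m ≥ 2 be even. For f ∈ S(ℝ^m)⊗Cl_{0,m} define the generalized translation τ_y f(x) = (2π)^{−m/2} ∫_{ℝ^m} conj(K_−(ξ,x)) K_−(y,ξ) F_− f(ξ) dξ, where F_− f(ξ) = (2π)^{−m/2}∫_{ℝ^m} K_−(x,ξ) f(x) dx. If f is real-valued and radial, f(x) = f₀(|x|) with f ∈ S(ℝ^m), then for all x, y ∈ ℝ^m: τ_y f(x) = f₀(|x − y|); that is, the generalized translation coincides with the classical translation on radial functions. -/

import Mathlib

open scoped BigOperators
open MeasureTheory

noncomputable section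

namespace CliffordFourier

/-- Concrete model of the complexified Clifford algebra `Cl_{0,m} ⊗ ℂ`:
an element is the family of its complex coefficients on the canonical basis
`e_S = e_{i₁} ⋯ e_{i_k}` (for `S = {i₁ < … < i_k} ⊆ {0,…,m-1}`). -/
def Cl (m : ℕ) : Type := Finset (Fin m) → ℂ

variable {m : ℕ}

instance : NormedAddCommGroup (Cl m) :=
  inferInstanceAs (NormedAddCommGroup (Finset (Fin m) → ℂ))
instance : NormedSpace ℝ (Cl m) :=
  inferInstanceAs (NormedSpace ℝ (Finset (Fin m) → ℂ))
instance : Module ℂ (Cl m) := inferInstanceAs (Module ℂ (Finset (Fin m) → ℂ))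
instance : CompleteSpace (Cl m) := inferInstanceAs (CompleteSpace (Finset (Fin m) → ℂ))

/-- The coefficient of `a` on the basis element `e_S`. -/
def coeff (a : Cl m) : Finset (Fin m) → ℂ := a

/-- Build an element of the Clifford algebra from its coefficients. -/
def ofCoeff (f : Finset (Fin m) → ℂ) : Cl m := f

/-- `1 = e_∅`. -/
instance : One (Cl m) := ⟨ofCoeff fun S => if S = (∅ : Finset (Fin m)) then 1 else 0⟩

/-- Clifford multiplication, determined by the relations `e_i e_j = - e_j e_i` (`i ≠ j`)
and `e_i² = -1`; on basis elements it is given by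
`e_T · e_U = (-1)^{#{(t,u) ∈ T×U : u < t}} · (-1)^{#(T∩U)} · e_{T Δ U}`. -/
instance : Mul (Cl m) :=
  ⟨fun a b => ofCoeff fun S => ∑ T : Finset (Fin m),
    ((-1 : ℂ) ^ ((((T ×ˢ (symmDiff T S)).filter fun p : Fin m × Fin m => p.2 < p.1).card)
        + (T ∩ (symmDiff T S)).card))
      * coeff a T * coeff b (symmDiff T S)⟩

/-- The generator `e_i`. -/
def e (m : ℕ) (i : Fin m) : Cl m := ofCoeff fun S => if S = {i} then 1 else 0

/-- The embedding of a vector `x ∈ ℝ^m` as `x = Σ_i x_i e_i` in the Clifford algebra. -/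
def vec (m : ℕ) (x : Fin m → ℝ) : Cl m := ∑ i : Fin m, (x i : ℂ) • e m i

/-- The Euclidean inner product `⟨x,y⟩ = Σ_i x_i y_i`. -/
def ip (x y : Fin m → ℝ) : ℝ := ∑ i, x i * y i

/-- The Euclidean norm `|x|`. -/
def nrm (x : Fin m → ℝ) : ℝ := Real.sqrt (ip x x)

/-- The wedge product `x∧y = Σ_{j<k} e_j e_k (x_j y_k - x_k y_j)`. -/
def wedge (m : ℕ) (x y : Fin m → ℝ) : Cl m :=
  ∑ j : Fin m, ∑ k : Fin m,
    if j < k then ((x j * y k - x k * y j : ℝ) : ℂ) • (e m j * e m k) else 0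

/-- Complex conjugation of the coefficients. -/
def cconj (a : Cl m) : Cl m := ofCoeff fun S => starRingEnd ℂ (coeff a S)

/-- The Gegenbauer polynomial `C_k^λ(w)`, defined through the standard three-term
recurrence, equivalent to the generating function `(1-2wt+t²)^{-λ} = Σ_k C_k^λ(w) t^k`. -/
def geg (lam : ℝ) : ℕ → ℝ → ℝ
  | 0, _ => 1
  | 1, w => 2 * lam * w
  | (k+2), w => (2 * ((k : ℝ) + 1 + lam) * w * geg lam (k+1) w
      - ((k : ℝ) + 2 * lam) * geg lam k w) / ((k : ℝ) + 2)

/-- The Bessel function of the first kind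
`J_a(z) = Σ_{j≥0} (-1)^j (z/2)^{2j+a} / (j! Γ(j+a+1))`. -/
def besselJ (a z : ℝ) : ℝ :=
  ∑' j : ℕ, ((-1 : ℝ)^j * (z/2) ^ (2*(j:ℝ) + a)) / (j.factorial * Real.Gamma ((j : ℝ) + a + 1))

/-- The entire function `J̃_a(t) = t^{-a} J_a(t) = Σ_{j≥0} (-1)^j (t/2)^{2j} / (j! Γ(j+a+1) 2^a)`
(for `t > 0` this is literally `t^{-a} J_a(t)`). -/
def besselJt (a t : ℝ) : ℝ :=
  ∑' j : ℕ, ((-1 : ℝ)^j * (t/2) ^ (2*j)) / (j.factorial * Real.Gamma ((j : ℝ) + a + 1) * (2:ℝ)^a)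

/-- The renormalized Gegenbauer polynomial `((k+λ)/λ) C_k^λ = C_k^{λ+1} - C_{k-2}^{λ+1}`
(the right-hand side also makes sense for `λ = 0`, i.e. `m = 2`). -/
def gegT (lam : ℝ) (k : ℕ) (w : ℝ) : ℝ :=
  geg (lam + 1) k w - (if 2 ≤ k then geg (lam + 1) (k - 2) w else 0)

/-- `A_λ(w,z) = 2^{λ-1} Γ(λ+1) Σ_{k≥0} (u + (-1)^k) z^{-λ} J_{k+λ}(z) C_k^λ(w)`, where `u = i^m`;
here written using `z^{-λ} J_{k+λ}(z) = z^k J̃_{k+λ}(z)`, which makes the formula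
well defined for all `z ≥ 0` (and all `m ≥ 2`). -/
def AfunR (u : ℂ) (lam w z : ℝ) : ℂ :=
  (((2:ℝ)^(lam - 1) * Real.Gamma (lam + 1) : ℝ) : ℂ) *
    ∑' k : ℕ, (u + (-1 : ℂ)^k) * ((z^k * besselJt ((k : ℝ) + lam) z * geg lam k w : ℝ) : ℂ)

/-- `B_λ(w,z) = -2^{λ-1} Γ(λ) Σ_{k≥0} (k+λ)(u - (-1)^k) z^{-λ} J_{k+λ}(z) C_k^λ(w)`;
here written using `Γ(λ)(k+λ)C_k^λ = Γ(λ+1)(C_k^{λ+1} - C_{k-2}^{λ+1})` and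
`z^{-λ} J_{k+λ}(z) = z^k J̃_{k+λ}(z)`, which makes the formula well defined
for all `z ≥ 0` and all `m ≥ 2` (including `λ = 0`). -/
def BfunR (u : ℂ) (lam w z : ℝ) : ℂ :=
  -(((2:ℝ)^(lam - 1) * Real.Gamma (lam + 1) : ℝ) : ℂ) *
    ∑' k : ℕ, (u - (-1 : ℂ)^k) * ((z^k * besselJt ((k : ℝ) + lam) z * gegT lam k w : ℝ) : ℂ)

/-- `C_λ(w,z) = -2^{λ-1} Γ(λ) Σ_{k≥0} (u + (-1)^k) z^{-λ-1} J_{k+λ}(z) (C_k^λ)'(w)`;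
here written using `Γ(λ) (C_k^λ)' = 2 Γ(λ+1) C_{k-1}^{λ+1}` and
`z^{-λ-1} J_{k+λ}(z) = z^{k-1} J̃_{k+λ}(z)`, which makes the formula well defined
for all `z ≥ 0` and all `m ≥ 2` (including `λ = 0`). -/
def CfunR (u : ℂ) (lam w z : ℝ) : ℂ :=
  -(((2:ℝ)^lam * Real.Gamma (lam + 1) : ℝ) : ℂ) *
    ∑' k : ℕ, (u + (-1 : ℂ)^k) *
      ((z^(k - 1) * besselJt ((k : ℝ) + lam) z
        * (if 1 ≤ k then geg (lam + 1) (k - 1) w else 0) : ℝ) : ℂ)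

/-- The Clifford-Fourier kernel
`K_-(x,y) = A_λ(w,z) + B_λ(w,z) + (x∧y) C_λ(w,z)`
with `λ = (m-2)/2`, `z = |x||y|`, `w = ⟨x,y⟩/(|x||y|)`. -/
def Kminus (m : ℕ) (x y : Fin m → ℝ) : Cl m :=
  (AfunR (Complex.I ^ m) (((m:ℝ) - 2)/2) (ip x y / (nrm x * nrm y)) (nrm x * nrm y)
    + BfunR (Complex.I ^ m) (((m:ℝ) - 2)/2) (ip x y / (nrm x * nrm y)) (nrm x * nrm y)) • (1 : Cl m)
  + CfunR (Complex.I ^ m) (((m:ℝ) - 2)/2) (ip x y / (nrm x * nrm y)) (nrm x * nrm y) • wedge m x y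

/-- The Clifford-Fourier transform `F_- f(y) = (2π)^{-m/2} ∫ K_-(x,y) f(x) dx`. -/
def Fm (m : ℕ) (f : (Fin m → ℝ) → Cl m) (y : Fin m → ℝ) : Cl m :=
  ((2*Real.pi) ^ (-(m:ℝ)/2)) • ∫ x : Fin m → ℝ, Kminus m x y * f x

/-- The generalized translation operator
`τ_y f(x) = (2π)^{-m/2} ∫ conj(K_-(ξ,x)) K_-(y,ξ) (F_- f)(ξ) dξ`. -/
def tau (m : ℕ) (f : (Fin m → ℝ) → Cl m) (y x : Fin m → ℝ) : Cl m :=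
  ((2*Real.pi) ^ (-(m:ℝ)/2)) •
    ∫ ξ : Fin m → ℝ, cconj (Kminus m ξ x) * (Kminus m y ξ * Fm m f ξ)

/-!
For `m = 2n + 2` the kernel and the plane wave have parallel expansions
`K_-(x,y) = ∑ₖ aₖ ((-1)^k Pₖ + (-1)^n Qₖ)` and `e^{ω⟨x,y⟩} = ∑ₖ aₖ ω^k (Pₖ + Qₖ)` for `ω² = -1`,
where `aₖ` depends only on `|x||y|`, and `Pₖ`, `Qₖ` are zonal eigenfunctions of the angular Dirac
operator with eigenvalues `-k` and `k + m - 2`. Against a radial weight on a ball, eigenfunctions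
with different eigenvalues are orthogonal, and on the diagonal the phases cancel in
`K_-(ξ,x) K_-(y,ξ)` just as they do in `e^{i⟨ξ,x⟩} e^{-i⟨y,ξ⟩}`. Hence both products have the same
integral against any radial `h` over any ball centred at the origin.

Since `K_-(ξ,x) K_-(x,ξ) = |K_-(ξ,x)|² ≥ 0`, the case `x = y` bounds `∫ |h| |K_-(ξ,x)|²` by `∫ |h|`.
This is the integrability needed to pass from balls to `ℝ^m`; no pointwise bound on the kernel
enters. Because `K_-(0,ξ) = 1`, the same identity shows that `F_- f` is the classical Fourier
transform of a radial `f`. As `K_-` is real for even `m`, the integral defining `τ_y f(x)` reduces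
to Fourier inversion at `y - x`, and `f (y - x) = f (x - y)`.
-/

/-! ### The Clifford algebra -/

section Algebra

lemma Cl.ext {a b : Cl m} (h : ∀ S, coeff a S = coeff b S) : a = b := funext h

lemma coeff_zero (S : Finset (Fin m)) : coeff (0 : Cl m) S = 0 := rfl

lemma coeff_one (S : Finset (Fin m)) : coeff (1 : Cl m) S = if S = ∅ then 1 else 0 := rfl

lemma coeff_add (a b : Cl m) (S : Finset (Fin m)) : coeff (a + b) S = coeff a S + coeff b S := rfl

lemma coeff_neg (a : Cl m) (S : Finset (Fin m)) : coeff (-a) S = -coeff a S := rfl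

lemma coeff_smul (c : ℂ) (a : Cl m) (S : Finset (Fin m)) : coeff (c • a) S = c * coeff a S := rfl

lemma coeff_real_smul (r : ℝ) (a : Cl m) (S : Finset (Fin m)) :
    coeff (r • a) S = r • coeff a S := rfl

/-- The sign in `e_T e_U = ± e_{T Δ U}`, written as a product so that it is visibly
multiplicative in both arguments. -/
def basisSign (T U : Finset (Fin m)) : ℂ := ∏ t ∈ T, ∏ u ∈ U, if u ≤ t then -1 else 1

lemma neg_one_pow_card_eq_basisSign (T U : Finset (Fin m)) :
    (-1 : ℂ) ^ (((T ×ˢ U).filter fun p : Fin m × Fin m => p.2 < p.1).card + (T ∩ U).card)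
      = basisSign T U := by
  have ite_le (t u : Fin m) : (if u ≤ t then (-1 : ℂ) else 1)
      = (if u < t then -1 else 1) * (if u = t then -1 else 1) := by
    rcases lt_trichotomy u t with h | h | h
    · simp [h, h.le, h.ne]
    · simp [h]
    · simp [h.not_gt, h.not_ge, h.ne']
  simp_rw [basisSign, ite_le, Finset.prod_mul_distrib, pow_add]
  congr 1
  · rw [← Finset.prod_product', Finset.prod_ite]
    simp
  · simp only [Finset.prod_ite_eq']
    rw [Finset.prod_ite]
    simp [Finset.filter_mem_eq_inter]

lemma prod_symmDiff {ι M : Type*} [DecidableEq ι] [CommMonoid M] {f : ι → M}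
    (hf : ∀ i, f i * f i = 1) (S T : Finset ι) :
    ∏ i ∈ symmDiff S T, f i = (∏ i ∈ S, f i) * ∏ i ∈ T, f i := by
  have cancel : (∏ i ∈ S ∩ T, f i) * ∏ i ∈ S ∩ T, f i = 1 := by
    simp [← Finset.prod_mul_distrib, hf]
  have hST : symmDiff S T = S \ T ∪ T \ S := rfl
  rw [hST, Finset.prod_union disjoint_sdiff_sdiff, ← Finset.prod_inter_mul_prod_sdiff S T f,
    ← Finset.prod_inter_mul_prod_sdiff T S f, Finset.inter_comm T S, mul_mul_mul_comm, cancel,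
    one_mul]

lemma basisSign_symmDiff_left (T T' U : Finset (Fin m)) :
    basisSign (symmDiff T T') U = basisSign T U * basisSign T' U := by
  refine prod_symmDiff (fun t => ?_) T T'
  rw [← Finset.prod_mul_distrib]
  exact Finset.prod_eq_one fun u _ => by split_ifs <;> simp

lemma basisSign_symmDiff_right (T U U' : Finset (Fin m)) :
    basisSign T (symmDiff U U') = basisSign T U * basisSign T U' := by
  simp only [basisSign, ← Finset.prod_mul_distrib]
  exact Finset.prod_congr rfl fun t _ =>
    prod_symmDiff (fun u => by split_ifs <;> simp) U U'

lemma coeff_mul (a b : Cl m) (S : Finset (Fin m)) :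
    coeff (a * b) S
      = ∑ T, basisSign T (symmDiff T S) * coeff a T * coeff b (symmDiff T S) := by
  simp only [← neg_one_pow_card_eq_basisSign]
  rfl

lemma cl_mul_assoc (a b c : Cl m) : a * b * c = a * (b * c) := by
  refine Cl.ext fun S => ?_
  simp only [coeff_mul, Finset.mul_sum, Finset.sum_mul]
  rw [Finset.sum_comm]
  refine Finset.sum_congr rfl fun R _ => ?_
  refine Finset.sum_bijective (symmDiff R)
    (Function.Involutive.bijective (symmDiff_symmDiff_cancel_left R)) (by simp) fun T _ => ?_
  have hTS : symmDiff (symmDiff R T) (symmDiff R S) = symmDiff T S := by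
    rw [symmDiff_comm R T, symmDiff_assoc, symmDiff_symmDiff_cancel_left]
  have hRT : symmDiff R T = symmDiff (symmDiff R S) (symmDiff T S) := by
    rw [symmDiff_comm T S, symmDiff_assoc, symmDiff_symmDiff_cancel_left]
  have hsign : basisSign R (symmDiff R T)
      = basisSign R (symmDiff R S) * basisSign R (symmDiff T S) := by
    rw [← basisSign_symmDiff_right, ← hRT]
  rw [hTS, basisSign_symmDiff_left R T, hsign]
  ring

lemma cl_one_mul (a : Cl m) : 1 * a = a := by
  refine Cl.ext fun S => ?_
  rw [coeff_mul, Fintype.sum_eq_single ∅ fun T hT => by simp [coeff_one, hT]]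
  have hS : symmDiff ∅ S = S := bot_symmDiff S
  simp [basisSign, coeff_one, hS]

lemma cl_mul_one (a : Cl m) : a * 1 = a := by
  refine Cl.ext fun S => ?_
  rw [coeff_mul, Fintype.sum_eq_single S fun T hT => ?_]
  · simp [basisSign, coeff_one]
  · simp [coeff_one, ← Finset.bot_eq_empty, symmDiff_eq_bot, hT]

/-- The ring structure carried by the Clifford product. It is only ever a local instance:
the statement of the theorem refers to the bare `1`, `*` and `•`. -/
@[reducible] def clRing : Ring (Cl m) where
  __ := (inferInstance : AddCommGroup (Cl m))
  mul := (· * ·)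
  one := 1
  left_distrib a b c := Cl.ext fun S => by
    simp only [coeff_mul, coeff_add, mul_add, Finset.sum_add_distrib]
  right_distrib a b c := Cl.ext fun S => by
    simp only [coeff_mul, coeff_add, mul_add, add_mul, Finset.sum_add_distrib]
  zero_mul a := Cl.ext fun S => by simp [coeff_mul, coeff_zero]
  mul_zero a := Cl.ext fun S => by simp [coeff_mul, coeff_zero]
  mul_assoc := cl_mul_assoc
  one_mul := cl_one_mul
  mul_one := cl_mul_one

attribute [local instance] clRing

/-- The complex algebra structure of `Cl m`. -/
@[reducible] def clComplexAlgebra : Algebra ℂ (Cl m) :=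
  Algebra.ofModule
    (fun c a b => Cl.ext fun S => by
      simp only [coeff_mul, coeff_smul, Finset.mul_sum, mul_assoc, mul_left_comm])
    (fun c a b => Cl.ext fun S => by
      simp only [coeff_mul, coeff_smul, Finset.mul_sum, mul_left_comm])

/-- The real algebra structure of `Cl m`. -/
@[reducible] def clRealAlgebra : Algebra ℝ (Cl m) :=
  Algebra.ofModule
    (fun r a b => Cl.ext fun S => by
      simp only [coeff_mul, coeff_real_smul, Finset.smul_sum, smul_mul_assoc, mul_smul_comm])
    (fun r a b => Cl.ext fun S => by
      simp only [coeff_mul, coeff_real_smul, Finset.smul_sum, mul_smul_comm])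

/-- The complex normed space structure of `Cl m` (coefficientwise supremum norm). -/
@[reducible] def clNormedSpace : NormedSpace ℂ (Cl m) :=
  inferInstanceAs (NormedSpace ℂ (Finset (Fin m) → ℂ))

lemma clIsScalarTower : IsScalarTower ℝ ℂ (Cl m) :=
  inferInstanceAs (IsScalarTower ℝ ℂ (Finset (Fin m) → ℂ))

lemma clFiniteDimensional : FiniteDimensional ℝ (Cl m) :=
  inferInstanceAs (FiniteDimensional ℝ (Finset (Fin m) → ℂ))

attribute [local instance] clComplexAlgebra clRealAlgebra clNormedSpace clIsScalarTower
  clFiniteDimensional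

/-- The basis element `e_S`. -/
def basisElem (S : Finset (Fin m)) : Cl m := ofCoeff fun T => if T = S then 1 else 0

lemma coeff_basisElem (S T : Finset (Fin m)) :
    coeff (basisElem S) T = if T = S then 1 else 0 := rfl

lemma basisElem_mul (S T : Finset (Fin m)) :
    basisElem S * basisElem T = basisSign S T • basisElem (symmDiff S T) := by
  refine Cl.ext fun R => ?_
  have hR : symmDiff S R = T ↔ R = symmDiff S T :=
    ⟨fun h => by rw [← h, symmDiff_symmDiff_cancel_left],
      fun h => by rw [h, symmDiff_symmDiff_cancel_left]⟩
  rw [coeff_mul, coeff_smul,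
    Fintype.sum_eq_single S fun U hU => by simp [coeff_basisElem, hU]]
  simp only [coeff_basisElem, hR, if_true]
  split_ifs with h <;> simp [h]

lemma e_mul_self (i : Fin m) : e m i * e m i = -1 := by
  refine (basisElem_mul {i} {i}).trans (Cl.ext fun S => ?_)
  simp [basisSign, coeff_neg, coeff_one, coeff_basisElem]

lemma e_mul_e_of_ne {i j : Fin m} (h : i ≠ j) : e m j * e m i = -(e m i * e m j) := by
  refine (basisElem_mul {j} {i}).trans ?_
  rw [show e m i * e m j = _ from basisElem_mul {i} {j}, symmDiff_comm, ← neg_smul]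
  congr 1
  rcases lt_or_gt_of_ne h with h | h <;> simp [basisSign, h.le, h.not_ge]

end Algebra

/-! ### Vectors and bivectors -/

section Vectors

attribute [local instance] clRing clComplexAlgebra clRealAlgebra clIsScalarTower

lemma ofReal_smul (r : ℝ) (a : Cl m) : (r : ℂ) • a = r • a := Complex.coe_smul r a

lemma vec_eq_sum (x : Fin m → ℝ) : vec m x = ∑ i, x i • e m i :=
  Finset.sum_congr rfl fun _ _ => ofReal_smul _ _

lemma ip_comm (x y : Fin m → ℝ) : ip x y = ip y x := dotProduct_comm x y

lemma vec_mul_vec (x y : Fin m → ℝ) :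
    vec m x * vec m y = ∑ j, ∑ l, (x j * y l) • (e m j * e m l) := by
  simp only [vec_eq_sum, Finset.sum_mul_sum, smul_mul_smul_comm]

lemma wedge_swap (x y : Fin m → ℝ) : wedge m y x = -wedge m x y := by
  simp only [wedge, ← Finset.sum_neg_distrib]
  refine Finset.sum_congr rfl fun j _ => Finset.sum_congr rfl fun k _ => ?_
  split_ifs
  · push_cast; module
  · simp

lemma wedge_eq (x y : Fin m → ℝ) : wedge m x y = vec m x * vec m y + ip x y • 1 := by
  let X (j k : Fin m) : Cl m := (x j * y k) • (e m j * e m k)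
  have hsplit : wedge m x y
      = ∑ j, ∑ k, (if j < k then X j k else 0) + ∑ j, ∑ k, (if k < j then X j k else 0) := by
    rw [Finset.sum_comm (f := fun j k => if k < j then X j k else 0)]
    simp only [wedge, ← Finset.sum_add_distrib]
    refine Finset.sum_congr rfl fun j _ => Finset.sum_congr rfl fun k _ => ?_
    split_ifs with hjk
    · simp only [X, e_mul_e_of_ne hjk.ne, ofReal_smul]
      module
    · simp
  have hdiag : ip x y • (1 : Cl m) = -∑ j, ∑ k, if j = k then X j k else 0 := by
    simp [X, e_mul_self, ip, Finset.sum_smul]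
  rw [hsplit, hdiag, vec_mul_vec, eq_add_neg_iff_add_eq]
  simp only [← Finset.sum_add_distrib]
  refine Finset.sum_congr rfl fun j _ => Finset.sum_congr rfl fun k _ => ?_
  rcases lt_trichotomy j k with h | rfl | h
  · simp [h, h.ne, h.not_gt, X]
  · simp [X]
  · simp [h, h.ne', h.not_gt, X]

lemma vec_mul_vec_swap (x y : Fin m → ℝ) :
    vec m y * vec m x = -(vec m x * vec m y) - (2 * ip x y) • 1 := by
  have h := wedge_swap x y
  rw [wedge_eq, wedge_eq, ip_comm y x] at h
  linear_combination (norm := module) h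

lemma vec_mul_self (x : Fin m → ℝ) : vec m x * vec m x = -(ip x x • 1) := by
  linear_combination (norm := module) (1 / 2 : ℝ) • vec_mul_vec_swap x x

lemma wedge_eq_sub (x y : Fin m → ℝ) : wedge m x y = -(vec m y * vec m x) - ip x y • 1 := by
  rw [wedge_eq]
  linear_combination (norm := module) vec_mul_vec_swap x y

lemma vec_mul_vec_mul_vec_mul_vec (x y : Fin m → ℝ) :
    vec m x * vec m y * (vec m y * vec m x) = (ip x x * ip y y) • 1 := by
  rw [mul_assoc, ← mul_assoc (vec m y), vec_mul_self, neg_mul, smul_mul_assoc, one_mul, mul_neg,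
    mul_smul_comm, vec_mul_self]
  module

lemma vec_mul_vec_mul_wedge (x y : Fin m → ℝ) :
    vec m x * vec m y * wedge m y x
      = (ip y y * ip x x) • 1 + ip y x • (vec m x * vec m y) := by
  rw [wedge_eq, mul_add, vec_mul_vec_mul_vec_mul_vec, mul_smul_comm, mul_one, mul_comm (ip x x)]

lemma wedge_mul_vec_mul_vec (x y : Fin m → ℝ) :
    wedge m x y * (vec m x * vec m y)
      = -((ip x x * ip y y) • 1) - ip x y • (vec m x * vec m y) := by
  rw [wedge_eq_sub, sub_mul, neg_mul, vec_mul_vec_mul_vec_mul_vec, smul_mul_assoc, one_mul,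
    mul_comm (ip x x)]

lemma wedge_mul_self (x y : Fin m → ℝ) :
    wedge m x y * wedge m x y = -((ip x x * ip y y - ip x y ^ 2) • 1) := by
  nth_rw 2 [wedge_eq]
  rw [mul_add, wedge_mul_vec_mul_vec, mul_smul_comm, mul_one, wedge_eq]
  module

end Vectors

section Calculus

attribute [local instance] clRing clComplexAlgebra clRealAlgebra clNormedSpace clIsScalarTower
  clFiniteDimensional

/-- The Clifford product as a continuous bilinear map; it replaces a normed ring structure,
the coefficientwise norm of `Cl m` not being submultiplicative. -/
def mulCLM : Cl m →L[ℝ] Cl m →L[ℝ] Cl m := (LinearMap.mul ℝ (Cl m)).toContinuousBilinearMap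

lemma norm_mul_le_mulCLM (a b : Cl m) : ‖a * b‖ ≤ ‖mulCLM (m := m)‖ * ‖a‖ * ‖b‖ :=
  mulCLM.le_opNorm₂ a b

lemma clContinuousMul : ContinuousMul (Cl m) := ⟨mulCLM.isBoundedBilinearMap.continuous⟩

attribute [local instance] clContinuousMul

section Products

variable {E : Type*} [NormedAddCommGroup E] [NormedSpace ℝ E] {Φ Ψ : E → Cl m}

lemma contDiff_mul {k : WithTop ℕ∞} (hΦ : ContDiff ℝ k Φ) (hΨ : ContDiff ℝ k Ψ) :
    ContDiff ℝ k fun v => Φ v * Ψ v :=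
  mulCLM.isBoundedBilinearMap.contDiff.comp₂ hΦ hΨ

lemma fderiv_mul_apply {v : E} (hΦ : DifferentiableAt ℝ Φ v) (hΨ : DifferentiableAt ℝ Ψ v)
    (w : E) :
    fderiv ℝ (fun v => Φ v * Ψ v) v w = fderiv ℝ Φ v w * Ψ v + Φ v * fderiv ℝ Ψ v w :=
  (congrArg (· w) (mulCLM.fderiv_of_bilinear hΦ hΨ)).trans (add_comm _ _)

end Products

lemma contDiff_ip {k : WithTop ℕ∞} :
    ContDiff ℝ k fun p : (Fin m → ℝ) × (Fin m → ℝ) => ip p.1 p.2 := by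
  unfold ip
  fun_prop

lemma continuous_ip : Continuous fun p : (Fin m → ℝ) × (Fin m → ℝ) => ip p.1 p.2 :=
  (contDiff_ip (k := 0)).continuous

/-- The inclusion of vectors in the Clifford algebra as a continuous linear map. -/
def vecCLM (m : ℕ) : (Fin m → ℝ) →L[ℝ] Cl m :=
  (Fintype.linearCombination ℝ (e m)).toContinuousLinearMap

lemma vecCLM_apply (x : Fin m → ℝ) : vecCLM m x = vec m x := (vec_eq_sum x).symm

lemma coe_vecCLM : ⇑(vecCLM m) = vec m := funext vecCLM_apply

lemma contDiff_vec {k : WithTop ℕ∞} : ContDiff ℝ k (vec m) := coe_vecCLM ▸ (vecCLM m).contDiff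

lemma continuous_vec : Continuous (vec m) := (contDiff_vec (k := 0)).continuous

end Calculus

/-! ### Rotations and radial weights -/

section Rotations

lemma ip_self_nonneg (ξ : Fin m → ℝ) : 0 ≤ ip ξ ξ :=
  Finset.sum_nonneg fun _ _ => mul_self_nonneg _

lemma inner_toLp (x y : Fin m → ℝ) :
    inner ℝ (WithLp.toLp 2 x) (WithLp.toLp 2 y) = ip x y := by
  simp [PiLp.inner_apply, ip, mul_comm]

lemma norm_toLp (x : Fin m → ℝ) : ‖WithLp.toLp 2 x‖ = nrm x := by
  rw [norm_eq_sqrt_real_inner, inner_toLp, nrm]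

lemma measurePreserving_of_ip_map {L : (Fin m → ℝ) →ₗ[ℝ] (Fin m → ℝ)}
    (hL : ∀ ξ, ip (L ξ) (L ξ) = ip ξ ξ) : MeasurePreserving L volume volume := by
  let M : EuclideanSpace ℝ (Fin m) →ₗᵢ[ℝ] EuclideanSpace ℝ (Fin m) :=
    ⟨(WithLp.linearEquiv 2 ℝ (Fin m → ℝ)).symm.toLinearMap ∘ₗ L
        ∘ₗ (WithLp.linearEquiv 2 ℝ (Fin m → ℝ)).toLinearMap,
      fun v => by
        change ‖WithLp.toLp 2 (L (WithLp.ofLp v))‖ = ‖WithLp.toLp 2 (WithLp.ofLp v)‖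
        rw [norm_toLp, norm_toLp, nrm, nrm, hL]⟩
  exact (PiLp.volume_preserving_ofLp (Fin m)).comp
    ((M.toLinearIsometryEquiv rfl).measurePreserving.comp (PiLp.volume_preserving_toLp (Fin m)))

/-- Functions on `ℝ^m` that only depend on the Euclidean length. -/
def IsRadial {α : Type*} (h : (Fin m → ℝ) → α) : Prop := ∀ ξ η, ip ξ ξ = ip η η → h ξ = h η

/-- The closed Euclidean ball of radius `√R`. -/
def solidBall (m : ℕ) (R : ℝ) : Set (Fin m → ℝ) := {ξ | ip ξ ξ ≤ R}

lemma isClosed_solidBall (R : ℝ) : IsClosed (solidBall m R) :=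
  isClosed_le (continuous_ip.comp (continuous_id.prodMk continuous_id)) continuous_const

lemma isCompact_solidBall (R : ℝ) : IsCompact (solidBall m R) := by
  refine Metric.isCompact_of_isClosed_isBounded (isClosed_solidBall R)
    (Metric.isBounded_closedBall (x := 0) (r := Real.sqrt R) |>.subset fun ξ hξ => ?_)
  rw [mem_closedBall_zero_iff, pi_norm_le_iff_of_nonneg (Real.sqrt_nonneg R)]
  refine fun i => Real.abs_le_sqrt (le_trans ?_ hξ)
  rw [pow_two]
  exact Finset.single_le_sum (f := fun i => ξ i * ξ i) (fun _ _ => mul_self_nonneg _)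
    (Finset.mem_univ i)

lemma measurableSet_solidBall (R : ℝ) : MeasurableSet (solidBall m R) :=
  (isClosed_solidBall R).measurableSet

/-- The generator `ξ_j ∂_l - ξ_l ∂_j` of the rotations of the `(j,l)`-plane, as a vector field. -/
def rotField (j l : Fin m) (ξ : Fin m → ℝ) : Fin m → ℝ := Pi.single l (ξ j) - Pi.single j (ξ l)

/-- The rotation by `θ` in the `(j,l)`-plane, an isometry when `j ≠ l`. -/
def rot (j l : Fin m) (θ : ℝ) : (Fin m → ℝ) →ₗ[ℝ] (Fin m → ℝ) where
  toFun ξ i := if i = j then Real.cos θ * ξ j - Real.sin θ * ξ l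
    else if i = l then Real.sin θ * ξ j + Real.cos θ * ξ l else ξ i
  map_add' ξ η := by
    ext i
    simp only [Pi.add_apply]
    split_ifs <;> ring
  map_smul' c ξ := by
    ext i
    simp only [Pi.smul_apply, smul_eq_mul, RingHom.id_apply]
    split_ifs <;> ring

variable {j l : Fin m}

lemma rot_apply (θ : ℝ) (ξ : Fin m → ℝ) (i : Fin m) :
    rot j l θ ξ i = if i = j then Real.cos θ * ξ j - Real.sin θ * ξ l
      else if i = l then Real.sin θ * ξ j + Real.cos θ * ξ l else ξ i := rfl

lemma rot_zero (ξ : Fin m → ℝ) : rot j l 0 ξ = ξ := by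
  ext i
  rw [rot_apply]
  split_ifs <;> simp_all

lemma ip_rot_self (hjl : j ≠ l) (θ : ℝ) (ξ : Fin m → ℝ) :
    ip (rot j l θ ξ) (rot j l θ ξ) = ip ξ ξ := by
  rw [ip, ip, ← sub_eq_zero, ← Finset.sum_sub_distrib,
    ← Finset.sum_subset (Finset.subset_univ {j, l}), Finset.sum_pair hjl]
  · simp only [rot_apply, if_true, hjl.symm, if_false]
    linear_combination (ξ j ^ 2 + ξ l ^ 2) * Real.sin_sq_add_cos_sq θ
  · intro i _ hi
    simp only [Finset.mem_insert, Finset.mem_singleton, not_or] at hi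
    simp [rot_apply, hi.1, hi.2]

lemma hasDerivAt_rot (hjl : j ≠ l) (θ : ℝ) (ξ : Fin m → ℝ) :
    HasDerivAt (fun θ => rot j l θ ξ) (rotField j l (rot j l θ ξ)) θ := by
  refine hasDerivAt_pi.2 fun i => ?_
  have hcos (a : ℝ) := (Real.hasDerivAt_cos θ).mul_const a
  have hsin (a : ℝ) := (Real.hasDerivAt_sin θ).mul_const a
  simp only [rot_apply, rotField, Pi.sub_apply, if_true, hjl.symm, if_false]
  by_cases hij : i = j
  · subst hij
    simp only [if_true, Pi.single_eq_same, Pi.single_eq_of_ne hjl]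
    exact ((hcos _).sub (hsin _)).congr_deriv (by ring)
  by_cases hil : i = l
  · subst hil
    simp only [if_true, if_neg hij, Pi.single_eq_same, Pi.single_eq_of_ne hij]
    exact ((hsin _).add (hcos _)).congr_deriv (by ring)
  · simp only [if_neg hij, if_neg hil, Pi.single_eq_of_ne hij, Pi.single_eq_of_ne hil, sub_self]
    exact hasDerivAt_const _ _

lemma continuous_rot (θ : ℝ) : Continuous (rot j l θ) :=
  LinearMap.continuous_of_finiteDimensional _

lemma rotField_self (ξ : Fin m → ℝ) : rotField j j ξ = 0 := sub_self _

lemma ip_rotField (j l : Fin m) (ξ x : Fin m → ℝ) :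
    ip (rotField j l ξ) x = ξ j * x l - ξ l * x j := by
  change (rotField j l ξ) ⬝ᵥ x = _
  simp [rotField, sub_dotProduct]

lemma continuous_rotField (j l : Fin m) : Continuous (rotField j l) :=
  ((continuous_single (A := fun _ => ℝ) l).comp (continuous_apply j)).sub
    ((continuous_single (A := fun _ => ℝ) j).comp (continuous_apply l))

variable {E : Type*} [NormedAddCommGroup E] [NormedSpace ℂ E] {R : ℝ} {h : (Fin m → ℝ) → ℂ}

lemma integrableOn_smul_of_continuous (hint : IntegrableOn h (solidBall m R))
    {Φ : (Fin m → ℝ) → E} (hΦ : Continuous Φ) :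
    IntegrableOn (fun ξ => h ξ • Φ ξ) (solidBall m R) :=
  hint.smul_continuousOn hΦ.continuousOn (isCompact_solidBall R)

variable [NormedSpace ℝ E]

lemma setIntegral_smul_comp_rot (hrad : IsRadial h) (hjl : j ≠ l) (θ : ℝ)
    {Φ : (Fin m → ℝ) → E} (hint : IntegrableOn (fun ξ => h ξ • Φ ξ) (solidBall m R)) :
    ∫ ξ in solidBall m R, h ξ • Φ (rot j l θ ξ) = ∫ ξ in solidBall m R, h ξ • Φ ξ := by
  have hmp := (measurePreserving_of_ip_map (ip_rot_self hjl θ)).restrict_preimage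
    (measurableSet_solidBall R)
  have hball : rot j l θ ⁻¹' solidBall m R = solidBall m R :=
    Set.ext fun ξ => by simp [solidBall, ip_rot_self hjl]
  have hmap := integral_map hmp.measurable.aemeasurable (f := fun ξ => h ξ • Φ ξ)
    (by rw [hmp.map_eq]; exact hint.aestronglyMeasurable)
  simp only [hmp.map_eq] at hmap
  simp only [hball, hrad _ _ (ip_rot_self hjl θ _)] at hmap
  exact hmap.symm

variable [SMulCommClass ℝ ℂ E]

/-- Rotations preserve both the weight and the volume, so the derivative at `θ = 0` of
`θ ↦ ∫ h • Φ ∘ rot θ` vanishes. -/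
theorem setIntegral_smul_fderiv_rotField (hrad : IsRadial h)
    (hint : IntegrableOn h (solidBall m R)) {Φ : (Fin m → ℝ) → E} (hΦ : ContDiff ℝ 1 Φ)
    (j l : Fin m) :
    ∫ ξ in solidBall m R, h ξ • fderiv ℝ Φ ξ (rotField j l ξ) = 0 := by
  rcases eq_or_ne j l with rfl | hjl
  · simp [rotField_self]
  have hcont : Continuous fun ξ => fderiv ℝ Φ ξ (rotField j l ξ) :=
    (hΦ.continuous_fderiv one_ne_zero).clm_apply (continuous_rotField j l)
  obtain ⟨M, hM⟩ := (isCompact_solidBall R).exists_bound_of_continuousOn hcont.continuousOn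
  have hderiv (ξ : Fin m → ℝ) (θ : ℝ) : HasDerivAt (fun θ => h ξ • Φ (rot j l θ ξ))
      (h ξ • fderiv ℝ Φ (rot j l θ ξ) (rotField j l (rot j l θ ξ))) θ :=
    ((hΦ.differentiable one_ne_zero _).hasFDerivAt.comp_hasDerivAt θ
      (hasDerivAt_rot hjl θ ξ)).const_smul (h ξ)
  have hbound : ∀ᵐ ξ ∂volume.restrict (solidBall m R), ∀ θ ∈ Set.univ,
      ‖h ξ • fderiv ℝ Φ (rot j l θ ξ) (rotField j l (rot j l θ ξ))‖ ≤ ‖h ξ‖ * M := by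
    refine (ae_restrict_iff' (measurableSet_solidBall R)).2 (.of_forall fun ξ hξ θ _ => ?_)
    rw [norm_smul]
    exact mul_le_mul_of_nonneg_left (hM _ ((ip_rot_self hjl θ ξ).trans_le hξ)) (norm_nonneg _)
  have hmeas := hint.aestronglyMeasurable
  have hconst : (fun θ => ∫ ξ in solidBall m R, h ξ • Φ (rot j l θ ξ))
      = fun _ => ∫ ξ in solidBall m R, h ξ • Φ ξ :=
    funext fun θ => setIntegral_smul_comp_rot hrad hjl θ
      (integrableOn_smul_of_continuous hint hΦ.continuous)
  have hrotInt := (hasDerivAt_integral_of_dominated_loc_of_deriv_le (𝕜 := ℝ) (x₀ := (0 : ℝ))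
    (F := fun θ ξ => h ξ • Φ (rot j l θ ξ))
    Filter.univ_mem
    (.of_forall fun θ => hmeas.smul (hΦ.continuous.comp (continuous_rot θ)).aestronglyMeasurable)
    (integrableOn_smul_of_continuous hint (hΦ.continuous.comp (continuous_rot 0)))
    (hmeas.smul (hcont.comp (continuous_rot 0)).aestronglyMeasurable)
    hbound (hint.norm.mul_const M) (.of_forall fun ξ θ _ => hderiv ξ θ)).2
  simp only [hconst, rot_zero] at hrotInt
  exact hrotInt.unique (hasDerivAt_const _ _)

end Rotations

/-! ### The angular Dirac operator -/

section Gamma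

attribute [local instance] clRing clComplexAlgebra clRealAlgebra clNormedSpace clIsScalarTower
  clFiniteDimensional clContinuousMul

/-- The angular Dirac operator `∑_{j<l} (ξ_j ∂_l - ξ_l ∂_j) Φ · e_j e_l`, with the bivectors acting
from the right; the sum over `j < l` is half the sum over all pairs. -/
def gammaRight (Φ : (Fin m → ℝ) → Cl m) (ξ : Fin m → ℝ) : Cl m :=
  (1 / 2 : ℝ) • ∑ j, ∑ l, fderiv ℝ Φ ξ (rotField j l ξ) * (e m j * e m l)

/-- The angular Dirac operator `-∑_{j<l} e_j e_l · (ξ_j ∂_l - ξ_l ∂_j) Ψ`, with the bivectors acting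
from the left. -/
def gammaLeft (Ψ : (Fin m → ℝ) → Cl m) (ξ : Fin m → ℝ) : Cl m :=
  (-1 / 2 : ℝ) • ∑ j, ∑ l, e m j * e m l * fderiv ℝ Ψ ξ (rotField j l ξ)

lemma continuous_gammaRight {Φ : (Fin m → ℝ) → Cl m} (hΦ : ContDiff ℝ 1 Φ) :
    Continuous (gammaRight Φ) := by
  unfold gammaRight
  exact Continuous.fun_const_smul (continuous_finsetSum _ fun j _ =>
    continuous_finsetSum _ fun l _ => ((hΦ.continuous_fderiv one_ne_zero).clm_apply
      (continuous_rotField j l)).mul continuous_const) _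

lemma continuous_gammaLeft {Ψ : (Fin m → ℝ) → Cl m} (hΨ : ContDiff ℝ 1 Ψ) :
    Continuous (gammaLeft Ψ) := by
  unfold gammaLeft
  exact Continuous.fun_const_smul (continuous_finsetSum _ fun j _ =>
    continuous_finsetSum _ fun l _ => continuous_const.mul
      ((hΨ.continuous_fderiv one_ne_zero).clm_apply (continuous_rotField j l))) _

lemma gammaRight_mul_sub_mul_gammaLeft {Φ Ψ : (Fin m → ℝ) → Cl m} (hΦ : ContDiff ℝ 1 Φ)
    (hΨ : ContDiff ℝ 1 Ψ) (ξ : Fin m → ℝ) :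
    gammaRight Φ ξ * Ψ ξ - Φ ξ * gammaLeft Ψ ξ
      = (1 / 2 : ℝ) • ∑ j, ∑ l,
          fderiv ℝ (fun ξ => Φ ξ * (e m j * e m l) * Ψ ξ) ξ (rotField j l ξ) := by
  have hdΦ := hΦ.differentiable one_ne_zero
  have hdΨ := hΨ.differentiable one_ne_zero
  have hleibniz (j l : Fin m) :
      fderiv ℝ (fun ξ => Φ ξ * (e m j * e m l) * Ψ ξ) ξ (rotField j l ξ)
        = fderiv ℝ Φ ξ (rotField j l ξ) * (e m j * e m l) * Ψ ξ
          + Φ ξ * (e m j * e m l * fderiv ℝ Ψ ξ (rotField j l ξ)) := by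
    rw [fderiv_mul_apply ((contDiff_mul hΦ contDiff_const).differentiable one_ne_zero ξ) (hdΨ ξ),
      fderiv_mul_apply (hdΦ ξ) (differentiableAt_const _)]
    simp only [fderiv_fun_const, Pi.zero_apply, zero_apply, mul_zero, add_zero,
      mul_assoc]
  simp only [hleibniz, Finset.sum_add_distrib, ← Finset.sum_mul, ← Finset.mul_sum, gammaRight,
    gammaLeft, smul_mul_assoc, mul_smul_comm]
  module

variable {R : ℝ} {h : (Fin m → ℝ) → ℂ} {Φ Ψ : (Fin m → ℝ) → Cl m}

theorem setIntegral_gammaRight_mul (hrad : IsRadial h) (hint : IntegrableOn h (solidBall m R))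
    (hΦ : ContDiff ℝ 1 Φ) (hΨ : ContDiff ℝ 1 Ψ) :
    ∫ ξ in solidBall m R, h ξ • (gammaRight Φ ξ * Ψ ξ)
      = ∫ ξ in solidBall m R, h ξ • (Φ ξ * gammaLeft Ψ ξ) := by
  let D (j l : Fin m) (ξ : Fin m → ℝ) : Cl m :=
    fderiv ℝ (fun ξ => Φ ξ * (e m j * e m l) * Ψ ξ) ξ (rotField j l ξ)
  have hprod (j l : Fin m) : ContDiff ℝ 1 fun ξ => Φ ξ * (e m j * e m l) * Ψ ξ :=
    contDiff_mul (contDiff_mul hΦ contDiff_const) hΨ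
  have hD (j l : Fin m) : IntegrableOn (fun ξ => h ξ • D j l ξ) (solidBall m R) :=
    integrableOn_smul_of_continuous hint
      (((hprod j l).continuous_fderiv one_ne_zero).clm_apply (continuous_rotField j l))
  have hright : IntegrableOn (fun ξ => h ξ • (gammaRight Φ ξ * Ψ ξ)) (solidBall m R) :=
    integrableOn_smul_of_continuous hint ((continuous_gammaRight hΦ).mul hΨ.continuous)
  have hleft : IntegrableOn (fun ξ => h ξ • (Φ ξ * gammaLeft Ψ ξ)) (solidBall m R) :=
    integrableOn_smul_of_continuous hint (hΦ.continuous.mul (continuous_gammaLeft hΨ))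
  rw [← sub_eq_zero, ← integral_sub hright hleft]
  calc ∫ ξ in solidBall m R, h ξ • (gammaRight Φ ξ * Ψ ξ) - h ξ • (Φ ξ * gammaLeft Ψ ξ)
      = ∫ ξ in solidBall m R, (1 / 2 : ℝ) • ∑ j, ∑ l, h ξ • D j l ξ := by
        simp only [← smul_sub, gammaRight_mul_sub_mul_gammaLeft hΦ hΨ, smul_comm (h _),
          Finset.smul_sum, D]
    _ = (1 / 2 : ℝ) • ∑ j, ∑ l, ∫ ξ in solidBall m R, h ξ • D j l ξ := by
        rw [integral_smul, integral_finsetSum _ fun j _ => integrable_finsetSum _ fun l _ => hD j l]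
        simp only [integral_finsetSum _ fun l _ => hD _ l]
    _ = 0 := by simp [D, setIntegral_smul_fderiv_rotField hrad hint (hprod _ _)]

theorem setIntegral_mul_eq_zero_of_eigenvalue_ne (hrad : IsRadial h)
    (hint : IntegrableOn h (solidBall m R)) (hΦ : ContDiff ℝ 1 Φ) (hΨ : ContDiff ℝ 1 Ψ) {κ κ' : ℝ}
    (hκ : κ ≠ κ') (hΦκ : gammaRight Φ = κ • Φ) (hΨκ : gammaLeft Ψ = κ' • Ψ) :
    ∫ ξ in solidBall m R, h ξ • (Φ ξ * Ψ ξ) = 0 := by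
  have hsymm := setIntegral_gammaRight_mul hrad hint hΦ hΨ
  simp only [hΦκ, hΨκ, Pi.smul_apply, smul_mul_assoc, mul_smul_comm, smul_comm (h _),
    integral_smul] at hsymm
  exact (smul_eq_zero.1 ((sub_smul κ κ' _).trans (sub_eq_zero.2 hsymm))).resolve_left
    (sub_ne_zero.2 hκ)

end Gamma

/-! ### Zonal functions -/

section Zonal

attribute [local instance] clRing clComplexAlgebra clRealAlgebra clNormedSpace clIsScalarTower
  clFiniteDimensional clContinuousMul

lemma vec_rotField (j l : Fin m) (ξ : Fin m → ℝ) :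
    vec m (rotField j l ξ) = ξ j • e m l - ξ l • e m j := by
  rw [← vecCLM_apply, rotField, map_sub]
  simp [vecCLM, Fintype.linearCombination_apply_single]

lemma e_mul_vec_mul_e (l : Fin m) (ξ : Fin m → ℝ) :
    e m l * vec m ξ * e m l = vec m ξ - (2 * ξ l) • e m l := by
  have he : e m l = vec m (Pi.single l 1) := by
    rw [← vecCLM_apply]
    simp [vecCLM, Fintype.linearCombination_apply_single]
  have hip : ip ξ (Pi.single l 1) = ξ l := by
    change ξ ⬝ᵥ _ = _
    simp
  have hswap := vec_mul_vec_swap ξ (Pi.single l 1)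
  rw [← he, hip] at hswap
  rw [hswap, sub_mul, neg_mul, mul_assoc, e_mul_self, smul_mul_assoc, one_mul, mul_neg, mul_one,
    neg_neg]

lemma sum_e_mul_vec_mul_e (ξ : Fin m → ℝ) :
    ∑ l, e m l * vec m ξ * e m l = ((m : ℝ) - 2) • vec m ξ := by
  simp only [e_mul_vec_mul_e, Finset.sum_sub_distrib, mul_smul, ← Finset.smul_sum, ← vec_eq_sum,
    Finset.sum_const, Finset.card_univ, Fintype.card_fin, ← Nat.cast_smul_eq_nsmul ℝ]
  module

lemma sum_smul_e_mul_e (ξ x : Fin m → ℝ) :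
    ∑ j, ∑ l, ip (rotField j l ξ) x • (e m j * e m l) = (2 : ℝ) • wedge m ξ x := by
  simp only [ip_rotField, sub_smul, Finset.sum_sub_distrib, mul_comm (ξ _) (x _),
    ← vec_mul_vec x ξ]
  simp only [mul_comm (x _) (ξ _), ← vec_mul_vec]
  linear_combination (norm := module) -(wedge_eq ξ x) - wedge_eq_sub ξ x

lemma sum_vec_rotField_mul (ξ : Fin m → ℝ) :
    ∑ j, ∑ l, vec m (rotField j l ξ) * (e m j * e m l) = (2 * ((m : ℝ) - 1)) • vec m ξ := by
  have hterm (j l : Fin m) : vec m (rotField j l ξ) * (e m j * e m l)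
      = e m l * (ξ j • e m j) * e m l + ξ l • e m l := by
    rw [vec_rotField, sub_mul, smul_mul_assoc, smul_mul_assoc, ← mul_assoc, ← mul_assoc, e_mul_self,
      mul_smul_comm, smul_mul_assoc, neg_mul, one_mul, smul_neg, sub_neg_eq_add]
  simp only [hterm, Finset.sum_add_distrib, ← vec_eq_sum, Finset.sum_const, Finset.card_univ,
    Fintype.card_fin, ← Nat.cast_smul_eq_nsmul ℝ]
  rw [Finset.sum_comm]
  simp only [← Finset.sum_mul, ← Finset.mul_sum, ← vec_eq_sum, sum_e_mul_vec_mul_e]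
  module

lemma sum_mul_vec_rotField (ξ : Fin m → ℝ) :
    ∑ j, ∑ l, e m j * e m l * vec m (rotField j l ξ) = -((2 * ((m : ℝ) - 1)) • vec m ξ) := by
  have hterm (j l : Fin m) : e m j * e m l * vec m (rotField j l ξ)
      = -(ξ j • e m j) - e m j * (ξ l • e m l) * e m j := by
    rw [vec_rotField, mul_sub, mul_smul_comm, mul_smul_comm, mul_assoc, e_mul_self, mul_neg,
      mul_one, smul_neg, mul_smul_comm, smul_mul_assoc]
  simp only [hterm, Finset.sum_sub_distrib, Finset.sum_neg_distrib, ← Finset.sum_mul,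
    ← Finset.mul_sum, ← vec_eq_sum, sum_e_mul_vec_mul_e, Finset.sum_const, Finset.card_univ,
    Fintype.card_fin, ← Nat.cast_smul_eq_nsmul ℝ, ← Finset.smul_sum]
  module

/-- The function `(x, y) ↦ p(⟨x,y⟩, |x|²|y|²)`. -/
def zonalCoeff (p : ℝ → ℝ → ℝ) (x y : Fin m → ℝ) : ℝ := p (ip x y) (ip x x * ip y y)

/-- The Clifford-valued zonal function `p + q · y x` with profiles `p` and `q`. -/
def zonal (p q : ℝ → ℝ → ℝ) (x y : Fin m → ℝ) : Cl m :=
  zonalCoeff p x y • 1 + zonalCoeff q x y • (vec m y * vec m x)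

lemma zonalCoeff_comm (p : ℝ → ℝ → ℝ) (x y : Fin m → ℝ) :
    zonalCoeff p x y = zonalCoeff p y x := by
  rw [zonalCoeff, zonalCoeff, ip_comm x y, mul_comm (ip x x)]

/-- The partial derivative of `p` in its first variable. -/
def derivFst (p : ℝ → ℝ → ℝ) (s t : ℝ) : ℝ := deriv (p · t) s

variable {p q : ℝ → ℝ → ℝ}

lemma hasDerivAt_derivFst (hp : ContDiff ℝ 1 ↿p) (s t : ℝ) :
    HasDerivAt (p · t) (derivFst p s t) s :=
  ((hp.comp (contDiff_id.prodMk contDiff_const)).differentiable one_ne_zero s).hasDerivAt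

lemma contDiff_zonalCoeff {k : WithTop ℕ∞} (hp : ContDiff ℝ k ↿p) :
    ContDiff ℝ k fun z : (Fin m → ℝ) × (Fin m → ℝ) => zonalCoeff p z.1 z.2 :=
  hp.comp (contDiff_ip.prodMk
    ((contDiff_ip.comp (contDiff_fst.prodMk contDiff_fst)).mul
      (contDiff_ip.comp (contDiff_snd.prodMk contDiff_snd))))

lemma contDiff_zonal {k : WithTop ℕ∞} (hp : ContDiff ℝ k ↿p) (hq : ContDiff ℝ k ↿q) :
    ContDiff ℝ k fun z : (Fin m → ℝ) × (Fin m → ℝ) => zonal p q z.1 z.2 :=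
  ((contDiff_zonalCoeff hp).smul contDiff_const).add ((contDiff_zonalCoeff hq).smul
    (contDiff_mul (contDiff_vec.comp contDiff_snd) (contDiff_vec.comp contDiff_fst)))

lemma contDiff_zonal_left {k : WithTop ℕ∞} (hp : ContDiff ℝ k ↿p) (hq : ContDiff ℝ k ↿q)
    (x : Fin m → ℝ) : ContDiff ℝ k fun ξ => zonal p q ξ x :=
  (contDiff_zonal hp hq).comp₂ contDiff_id contDiff_const

lemma contDiff_zonal_right {k : WithTop ℕ∞} (hp : ContDiff ℝ k ↿p) (hq : ContDiff ℝ k ↿q)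
    (y : Fin m → ℝ) : ContDiff ℝ k fun ξ => zonal p q y ξ :=
  (contDiff_zonal hp hq).comp₂ contDiff_const contDiff_id

lemma fderiv_vec_apply (ξ v : Fin m → ℝ) : fderiv ℝ (vec m) ξ v = vec m v := by
  rw [← coe_vecCLM, ContinuousLinearMap.fderiv]

/-- Only the derivative in the first slot survives, rotations leaving `|ξ|²|x|²` fixed. -/
lemma fderiv_zonalCoeff_rotField (hp : ContDiff ℝ 1 ↿p) (j l : Fin m) (ξ x : Fin m → ℝ) :
    fderiv ℝ (fun ξ => zonalCoeff p ξ x) ξ (rotField j l ξ)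
      = zonalCoeff (derivFst p) ξ x * ip (rotField j l ξ) x := by
  rcases eq_or_ne j l with rfl | hjl
  · simp [rotField_self, ip]
  have hrot : HasDerivAt (fun θ => rot j l θ ξ) (rotField j l ξ) 0 := by
    simpa only [rot_zero] using hasDerivAt_rot hjl 0 ξ
  have hip : HasDerivAt (fun θ => ip (rot j l θ ξ) x) (ip (rotField j l ξ) x) 0 :=
    HasDerivAt.fun_sum fun i _ => (hasDerivAt_pi.1 hrot i).mul_const (x i)
  have hdiff : DifferentiableAt ℝ (fun ξ => zonalCoeff p ξ x) (rot j l 0 ξ) :=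
    ((contDiff_zonalCoeff hp).comp (contDiff_id.prodMk contDiff_const)).differentiable
      one_ne_zero _
  have hchain := hdiff.hasFDerivAt.comp_hasDerivAt 0 hrot
  have hdirect : HasDerivAt (fun θ => zonalCoeff p (rot j l θ ξ) x)
      (derivFst p (ip (rot j l 0 ξ) x) (ip ξ ξ * ip x x) * ip (rotField j l ξ) x) 0 := by
    simp only [zonalCoeff, ip_rot_self hjl]
    exact (hasDerivAt_derivFst hp _ _).comp 0 hip
  rw [rot_zero] at hchain hdirect
  exact hchain.unique hdirect

lemma fderiv_zonal_left (hp : ContDiff ℝ 1 ↿p) (hq : ContDiff ℝ 1 ↿q)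
    (j l : Fin m) (ξ x : Fin m → ℝ) :
    fderiv ℝ (fun ξ => zonal p q ξ x) ξ (rotField j l ξ)
      = (zonalCoeff (derivFst p) ξ x * ip (rotField j l ξ) x) • 1
        + (zonalCoeff q ξ x • (vec m x * vec m (rotField j l ξ))
          + (zonalCoeff (derivFst q) ξ x * ip (rotField j l ξ) x) • (vec m x * vec m ξ)) := by
  have hslice : ContDiff ℝ 1 fun ξ : Fin m → ℝ => (ξ, x) := contDiff_id.prodMk contDiff_const
  have hzp := ((contDiff_zonalCoeff hp).comp hslice).differentiable one_ne_zero ξ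
  have hzq := ((contDiff_zonalCoeff hq).comp hslice).differentiable one_ne_zero ξ
  have hvec : DifferentiableAt ℝ (vec m) ξ := (contDiff_vec (k := 1)).differentiable one_ne_zero ξ
  have hxξ : DifferentiableAt ℝ (fun ξ => vec m x * vec m ξ) ξ :=
    (contDiff_mul contDiff_const contDiff_vec).differentiable one_ne_zero ξ
  simp only [Function.comp_def] at hzp hzq
  simp only [zonal]
  rw [fderiv_fun_add (hzp.smul_const _) (hzq.fun_smul hxξ), fderiv_fun_smul hzq hxξ,
    fderiv_smul_const hzp]
  simp only [add_apply, smul_apply, ContinuousLinearMap.smulRight_apply,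
    fderiv_mul_apply (differentiableAt_const _) hvec, fderiv_fun_const, Pi.zero_apply, zero_apply,
    zero_mul, zero_add, fderiv_vec_apply, fderiv_zonalCoeff_rotField hp,
    fderiv_zonalCoeff_rotField hq]

lemma fderiv_zonal_right (hp : ContDiff ℝ 1 ↿p) (hq : ContDiff ℝ 1 ↿q)
    (j l : Fin m) (ξ y : Fin m → ℝ) :
    fderiv ℝ (fun ξ => zonal p q y ξ) ξ (rotField j l ξ)
      = (zonalCoeff (derivFst p) ξ y * ip (rotField j l ξ) y) • 1
        + (zonalCoeff q ξ y • (vec m (rotField j l ξ) * vec m y)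
          + (zonalCoeff (derivFst q) ξ y * ip (rotField j l ξ) y) • (vec m ξ * vec m y)) := by
  have hslice : ContDiff ℝ 1 fun ξ : Fin m → ℝ => (ξ, y) := contDiff_id.prodMk contDiff_const
  have hzp := ((contDiff_zonalCoeff hp).comp hslice).differentiable one_ne_zero ξ
  have hzq := ((contDiff_zonalCoeff hq).comp hslice).differentiable one_ne_zero ξ
  have hvec : DifferentiableAt ℝ (vec m) ξ := (contDiff_vec (k := 1)).differentiable one_ne_zero ξ
  have hξy : DifferentiableAt ℝ (fun ξ => vec m ξ * vec m y) ξ :=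
    (contDiff_mul contDiff_vec contDiff_const).differentiable one_ne_zero ξ
  simp only [Function.comp_def] at hzp hzq
  simp only [zonal, zonalCoeff_comm _ y]
  rw [fderiv_fun_add (hzp.smul_const _) (hzq.fun_smul hξy), fderiv_fun_smul hzq hξy,
    fderiv_smul_const hzp]
  simp only [add_apply, smul_apply, ContinuousLinearMap.smulRight_apply,
    fderiv_mul_apply hvec (differentiableAt_const _), fderiv_fun_const, Pi.zero_apply, zero_apply,
    mul_zero, add_zero, fderiv_vec_apply, fderiv_zonalCoeff_rotField hp,
    fderiv_zonalCoeff_rotField hq]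

/-- The profiles `p`, `q` of a zonal eigenfunction of the angular Dirac operator with eigenvalue
`κ`, seen as functions of `s = ⟨x,y⟩` and `t = |x|²|y|²`. -/
structure GammaEigenpair (m : ℕ) (κ : ℝ) (p q : ℝ → ℝ → ℝ) : Prop where
  contDiff_fst : ContDiff ℝ 1 ↿p
  contDiff_snd : ContDiff ℝ 1 ↿q
  scalar_eq : ∀ s t, -s * derivFst p s t + t * derivFst q s t = κ * p s t
  bivector_eq : ∀ s t, -derivFst p s t + (m - 1) * q s t + s * derivFst q s t = κ * q s t

namespace GammaEigenpair

variable {κ : ℝ}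

lemma gammaRight_zonal (hpq : GammaEigenpair m κ p q) (x : Fin m → ℝ) :
    gammaRight (fun ξ => zonal p q ξ x) = κ • fun ξ => zonal p q ξ x := by
  ext1 ξ
  have hterm (j l : Fin m) :
      fderiv ℝ (fun ξ => zonal p q ξ x) ξ (rotField j l ξ) * (e m j * e m l)
        = zonalCoeff (derivFst p) ξ x • ip (rotField j l ξ) x • (e m j * e m l)
          + (zonalCoeff q ξ x • (vec m x * (vec m (rotField j l ξ) * (e m j * e m l)))
            + zonalCoeff (derivFst q) ξ x • (vec m x * vec m ξ
              * ip (rotField j l ξ) x • (e m j * e m l))) := by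
    simp only [fderiv_zonal_left hpq.contDiff_fst hpq.contDiff_snd, add_mul, smul_mul_assoc,
      one_mul, mul_smul, mul_smul_comm, mul_assoc]
  simp only [gammaRight, hterm, Finset.sum_add_distrib, ← Finset.smul_sum, ← Finset.mul_sum,
    sum_smul_e_mul_e, sum_vec_rotField_mul]
  simp only [mul_smul_comm, vec_mul_vec_mul_wedge, Pi.smul_apply, zonal]
  rw [wedge_eq_sub]
  linear_combination (norm := (simp only [zonalCoeff]; module))
    (hpq.scalar_eq (ip ξ x) (ip ξ ξ * ip x x)) • (1 : Cl m)
      + (hpq.bivector_eq (ip ξ x) (ip ξ ξ * ip x x)) • (vec m x * vec m ξ)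

lemma gammaLeft_zonal (hpq : GammaEigenpair m κ p q) (y : Fin m → ℝ) :
    gammaLeft (fun ξ => zonal p q y ξ) = κ • fun ξ => zonal p q y ξ := by
  ext1 ξ
  have hterm (j l : Fin m) :
      e m j * e m l * fderiv ℝ (fun ξ => zonal p q y ξ) ξ (rotField j l ξ)
        = zonalCoeff (derivFst p) ξ y • ip (rotField j l ξ) y • (e m j * e m l)
          + (zonalCoeff q ξ y • (e m j * e m l * vec m (rotField j l ξ) * vec m y)
            + zonalCoeff (derivFst q) ξ y • (ip (rotField j l ξ) y • (e m j * e m l)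
              * (vec m ξ * vec m y))) := by
    simp only [fderiv_zonal_right hpq.contDiff_fst hpq.contDiff_snd, mul_add, smul_mul_assoc,
      mul_one, mul_smul, mul_smul_comm, mul_assoc]
  simp only [gammaLeft, hterm, Finset.sum_add_distrib, ← Finset.smul_sum, ← Finset.sum_mul,
    sum_smul_e_mul_e, sum_mul_vec_rotField]
  simp only [neg_mul, smul_mul_assoc, wedge_mul_vec_mul_vec, Pi.smul_apply, zonal,
    zonalCoeff_comm _ y]
  rw [wedge_eq]
  linear_combination (norm := (simp only [zonalCoeff]; module))
    (hpq.scalar_eq (ip ξ y) (ip ξ ξ * ip y y)) • (1 : Cl m)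
      + (hpq.bivector_eq (ip ξ y) (ip ξ ξ * ip y y)) • (vec m ξ * vec m y)

theorem setIntegral_zonal_mul_zonal_eq_zero {κ' : ℝ} {r s : ℝ → ℝ → ℝ}
    (hpq : GammaEigenpair m κ p q) (hrs : GammaEigenpair m κ' r s) (hκ : κ ≠ κ')
    {R : ℝ} {h : (Fin m → ℝ) → ℂ} (hrad : IsRadial h) (hint : IntegrableOn h (solidBall m R))
    (x y : Fin m → ℝ) :
    ∫ ξ in solidBall m R, h ξ • (zonal p q ξ x * zonal r s y ξ) = 0 :=
  setIntegral_mul_eq_zero_of_eigenvalue_ne hrad hint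
    (contDiff_zonal_left hpq.contDiff_fst hpq.contDiff_snd x)
    (contDiff_zonal_right hrs.contDiff_fst hrs.contDiff_snd y) hκ
    (hpq.gammaRight_zonal x) (hrs.gammaLeft_zonal y)

end GammaEigenpair

end Zonal

/-! ### Homogeneous Gegenbauer polynomials -/

section Gegenbauer

/-- The polynomial in `s` and `t` with value `z^k C_k^μ(w)` at `s = z w`, `t = z²`, stored at index
`k + 2`. The entries at indices `0` and `1` are the vanishing polynomials of degrees `-2` and
`-1`. -/
def solidGeg (μ : ℝ) : ℕ → ℝ → ℝ → ℝ
  | 0, _, _ => 0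
  | 1, _, _ => 0
  | 2, _, _ => 1
  | k + 3, s, t => (2 * (k + μ) * s * solidGeg μ (k + 2) s t
      - (k - 1 + 2 * μ) * t * solidGeg μ (k + 1) s t) / (k + 1)

variable (μ s t : ℝ)

lemma solidGeg_of_lt_two {k : ℕ} (hk : k < 2) : solidGeg μ k s t = 0 := by
  interval_cases k <;> rfl

lemma solidGeg_recurrence (k : ℕ) :
    (k + 1) * solidGeg μ (k + 3) s t
      = 2 * (k + μ) * s * solidGeg μ (k + 2) s t
        - (k - 1 + 2 * μ) * t * solidGeg μ (k + 1) s t := by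
  rw [solidGeg]
  field_simp

lemma contDiff_solidGeg {μ : ℝ} {r : WithTop ℕ∞} : ∀ k, ContDiff ℝ r ↿(solidGeg μ k)
  | 0 | 1 | 2 => contDiff_const
  | k + 3 => by
    have h₂ : ContDiff ℝ r fun z : ℝ × ℝ => solidGeg μ (k + 2) z.1 z.2 := contDiff_solidGeg (k + 2)
    have h₁ : ContDiff ℝ r fun z : ℝ × ℝ => solidGeg μ (k + 1) z.1 z.2 := contDiff_solidGeg (k + 1)
    change ContDiff ℝ r fun z : ℝ × ℝ => solidGeg μ (k + 3) z.1 z.2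
    simp only [solidGeg]
    fun_prop

lemma derivFst_solidGeg_of_lt_three {k : ℕ} (hk : k < 3) : derivFst (solidGeg μ k) s t = 0 := by
  interval_cases k <;> exact deriv_const s _

lemma derivFst_solidGeg_recurrence (k : ℕ) :
    (k + 1) * derivFst (solidGeg μ (k + 3)) s t
      = 2 * (k + μ) * (solidGeg μ (k + 2) s t + s * derivFst (solidGeg μ (k + 2)) s t)
        - (k - 1 + 2 * μ) * t * derivFst (solidGeg μ (k + 1)) s t := by
  have hderiv (l : ℕ) := hasDerivAt_derivFst (contDiff_solidGeg (μ := μ) l) s t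
  have hlhs := (hderiv (k + 3)).const_mul ((k : ℝ) + 1)
  have hrhs := (((hasDerivAt_id s).const_mul (2 * (k + μ))).mul (hderiv (k + 2))).sub
    ((hderiv (k + 1)).const_mul ((k - 1 + 2 * μ) * t))
  have heq : (fun s => (k + 1 : ℝ) * solidGeg μ (k + 3) s t) = _ :=
    funext fun s => solidGeg_recurrence μ s t k
  rw [heq] at hlhs
  refine (hlhs.unique hrhs).trans ?_
  simp only [id]
  ring

lemma derivFst_solidGeg_contiguous : ∀ k : ℕ,
    s * derivFst (solidGeg μ (k + 1)) s t - t * derivFst (solidGeg μ k) s t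
        = (k - 1) * solidGeg μ (k + 1) s t ∧
      derivFst (solidGeg μ (k + 1)) s t - s * derivFst (solidGeg μ k) s t
        = (k + 2 * μ - 2) * solidGeg μ k s t
  | 0 | 1 => by simp [solidGeg_of_lt_two, derivFst_solidGeg_of_lt_three]
  | k + 2 => by
    obtain ⟨hs, ht⟩ := derivFst_solidGeg_contiguous (k + 1)
    have hrec := solidGeg_recurrence μ s t k
    have hrec' := derivFst_solidGeg_recurrence μ s t k
    push_cast at hs ht ⊢
    have hnext : derivFst (solidGeg μ (k + 3)) s t - s * derivFst (solidGeg μ (k + 2)) s t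
        = (k + 2 * μ) * solidGeg μ (k + 2) s t :=
      mul_left_cancel₀ (Nat.cast_add_one_ne_zero k)
        (by linear_combination hrec' + (k - 1 + 2 * μ) * hs)
    exact ⟨by linear_combination s * hnext + s * hs - t * ht - hrec, by linear_combination hnext⟩

variable {μ}

lemma gammaEigenpair_solidGeg (hm : (m : ℝ) = 2 * μ) (k : ℕ) :
    GammaEigenpair m (-k) (solidGeg μ (k + 2)) (solidGeg μ (k + 1)) where
  contDiff_fst := contDiff_solidGeg _
  contDiff_snd := contDiff_solidGeg _
  scalar_eq s t := by
    have h := (derivFst_solidGeg_contiguous μ s t (k + 1)).1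
    push_cast at h
    linear_combination -h
  bivector_eq s t := by
    have h := (derivFst_solidGeg_contiguous μ s t (k + 1)).2
    push_cast at h
    rw [hm]
    linear_combination -h

lemma gammaEigenpair_neg_mul_solidGeg (hm : (m : ℝ) = 2 * μ) (k : ℕ) :
    GammaEigenpair m (k + m - 2) (fun s t => -(t * solidGeg μ k s t))
      (fun s t => -solidGeg μ (k + 1) s t) where
  contDiff_fst := (contDiff_snd.mul (contDiff_solidGeg k)).neg
  contDiff_snd := (contDiff_solidGeg (k + 1)).neg
  scalar_eq s t := by
    simp only [derivFst, deriv.fun_neg, deriv_const_mul_field]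
    have h := (derivFst_solidGeg_contiguous μ s t k).2
    rw [derivFst, derivFst] at h
    rw [hm]
    linear_combination -t * h
  bivector_eq s t := by
    simp only [derivFst, deriv.fun_neg, deriv_const_mul_field]
    have h := (derivFst_solidGeg_contiguous μ s t k).1
    rw [derivFst, derivFst] at h
    rw [hm]
    linear_combination -h

lemma abs_solidGeg_le {s t Z : ℝ} (hμ : 0 ≤ μ) (hZ : 1 ≤ Z) (hs : |s| ≤ Z) (ht : |t| ≤ Z ^ 2) :
    ∀ k, |solidGeg μ k s t| ≤ ((4 + 4 * μ) * Z) ^ k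
  | 0 => by simp [solidGeg]
  | 1 => by simp only [solidGeg, abs_zero]; positivity
  | 2 => by
    simp only [solidGeg, abs_one]
    exact one_le_pow₀ (by nlinarith)
  | k + 3 => by
    have h₂ := abs_solidGeg_le hμ hZ hs ht (k + 2)
    have h₁ := abs_solidGeg_le hμ hZ hs ht (k + 1)
    have hk : (0 : ℝ) < k + 1 := by positivity
    have hcoeff : |k - 1 + 2 * μ| ≤ (k + 1) * (1 + 2 * μ) := by
      rw [abs_le]
      constructor <;> nlinarith
    refine le_of_mul_le_mul_left ?_ hk
    set c := 4 + 4 * μ with hc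
    calc (k + 1) * |solidGeg μ (k + 3) s t|
        = |2 * (k + μ) * s * solidGeg μ (k + 2) s t
            - (k - 1 + 2 * μ) * t * solidGeg μ (k + 1) s t| := by
          rw [← solidGeg_recurrence, abs_mul, abs_of_pos hk]
      _ ≤ 2 * (k + μ) * |s| * |solidGeg μ (k + 2) s t|
            + |k - 1 + 2 * μ| * |t| * |solidGeg μ (k + 1) s t| := by
          refine (abs_sub _ _).trans_eq ?_
          simp only [abs_mul, abs_two, abs_of_nonneg (by positivity : (0 : ℝ) ≤ k + μ)]
      _ ≤ 2 * ((k + 1) * (1 + μ)) * Z * (c * Z) ^ (k + 2)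
            + (k + 1) * (1 + 2 * μ) * Z ^ 2 * (c * Z) ^ (k + 1) := by
          gcongr
          nlinarith
      _ = (k + 1) * ((c * Z) ^ (k + 1) * Z ^ 2 * (2 * (1 + μ) * c + (1 + 2 * μ))) := by ring
      _ ≤ (k + 1) * ((c * Z) ^ (k + 1) * Z ^ 2 * c ^ 2) := by
          gcongr
          nlinarith [hc]
      _ = (k + 1) * (c * Z) ^ (k + 3) := by ring

variable (μ)

lemma exists_abs_solidGeg_le_pow (hμ : 0 ≤ μ) :
    ∃ c : ℝ, 0 ≤ c ∧ ∀ k, |solidGeg μ k s t| ≤ c ^ k := by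
  have hs := abs_nonneg s
  have ht := abs_nonneg t
  exact ⟨(4 + 4 * μ) * (1 + |s| + |t|), by positivity,
    abs_solidGeg_le hμ (by linarith) (by linarith) (by nlinarith)⟩

lemma pow_mul_geg_recurrence (k : ℕ) (w z : ℝ) :
    (k + 2) * (z ^ (k + 2) * geg μ (k + 2) w)
      = 2 * (k + 1 + μ) * (z * w) * (z ^ (k + 1) * geg μ (k + 1) w)
        - (k + 2 * μ) * z ^ 2 * (z ^ k * geg μ k w) := by
  rw [geg]
  field_simp
  ring

lemma pow_mul_geg (w z : ℝ) : ∀ k, z ^ k * geg μ k w = solidGeg μ (k + 2) (z * w) (z ^ 2)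
  | 0 => by simp [geg, solidGeg]
  | 1 => by
    simp only [geg, solidGeg]
    ring
  | k + 2 => by
    have hrec := solidGeg_recurrence μ (z * w) (z ^ 2) (k + 1)
    push_cast at hrec
    refine mul_left_cancel₀ (by positivity : (k + 2 : ℝ) ≠ 0) ?_
    rw [pow_mul_geg_recurrence, pow_mul_geg w z (k + 1), pow_mul_geg w z k]
    linear_combination -hrec

/-- Lowering the order: `C_k^λ = C_k^{λ+1} - 2 w C_{k-1}^{λ+1} + C_{k-2}^{λ+1}`. -/
lemma pow_mul_geg_eq_solidGeg_succ (w z : ℝ) : ∀ k,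
    z ^ k * geg μ k w = solidGeg (μ + 1) (k + 2) (z * w) (z ^ 2)
      - 2 * (z * w) * solidGeg (μ + 1) (k + 1) (z * w) (z ^ 2)
      + z ^ 2 * solidGeg (μ + 1) k (z * w) (z ^ 2)
  | 0 => by simp [geg, solidGeg]
  | 1 => by
    simp only [geg, solidGeg]
    ring
  | k + 2 => by
    have hrec₂ := solidGeg_recurrence (μ + 1) (z * w) (z ^ 2) (k + 1)
    have hrec₁ := solidGeg_recurrence (μ + 1) (z * w) (z ^ 2) k
    have hrec₀ : k * solidGeg (μ + 1) (k + 2) (z * w) (z ^ 2)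
        = 2 * (k + μ) * (z * w) * solidGeg (μ + 1) (k + 1) (z * w) (z ^ 2)
          - (k + 2 * μ) * z ^ 2 * solidGeg (μ + 1) k (z * w) (z ^ 2) := by
      rcases k with _ | k
      · simp [solidGeg]
      · have := solidGeg_recurrence (μ + 1) (z * w) (z ^ 2) k
        push_cast
        linear_combination this
    push_cast at hrec₂
    refine mul_left_cancel₀ (by positivity : (k + 2 : ℝ) ≠ 0) ?_
    rw [pow_mul_geg_recurrence, pow_mul_geg_eq_solidGeg_succ w z (k + 1),
      pow_mul_geg_eq_solidGeg_succ w z k]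
    linear_combination -hrec₂ + 2 * (z * w) * hrec₁ - z ^ 2 * hrec₀

lemma pow_mul_gegT (w z : ℝ) (k : ℕ) :
    z ^ k * gegT μ k w = solidGeg (μ + 1) (k + 2) (z * w) (z ^ 2)
      - z ^ 2 * solidGeg (μ + 1) k (z * w) (z ^ 2) := by
  rw [gegT, mul_sub, pow_mul_geg]
  rcases k with _ | _ | k
  · simp [solidGeg]
  · simp [solidGeg]
  · rw [if_pos (by omega), Nat.add_sub_cancel (n := k) (m := 2), ← pow_mul_geg (k := k)]
    ring

lemma pow_pred_mul_geg_pred (w z : ℝ) : ∀ k : ℕ,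
    z ^ (k - 1) * (if 1 ≤ k then geg μ (k - 1) w else 0) = solidGeg μ (k + 1) (z * w) (z ^ 2)
  | 0 => by simp [solidGeg]
  | k + 1 => by rw [if_pos (by omega), Nat.add_sub_cancel, pow_mul_geg]

end Gegenbauer

/-! ### The plane wave expansion in finite degree -/

section PlaneWaveCoeff

/-- The coefficient of `t^j T_{N-2j}` in `s^N / N!`, where `T_k = z^k (k+n)/n · C_k^n`. -/
def waveCoeff (n N j : ℕ) : ℝ := n.factorial / (2 ^ N * j.factorial * (N - j + n).factorial)

lemma solidGeg_recurrence_sub (μ s t : ℝ) (d j : ℕ) :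
    2 * (d - j + μ) * s * solidGeg μ (d + 2 - j) s t
      = (d - j + 1) * solidGeg μ (d + 3 - j) s t
        + (d - j - 1 + 2 * μ) * t * solidGeg μ (d + 1 - j) s t := by
  rcases le_or_gt j d with hjd | hdj
  · obtain ⟨k, rfl⟩ := Nat.exists_eq_add_of_le hjd
    simp only [add_assoc, Nat.add_sub_cancel_left]
    push_cast
    linear_combination -solidGeg_recurrence μ s t k
  · rw [solidGeg_of_lt_two μ s t (by omega : d + 2 - j < 2),
      solidGeg_of_lt_two μ s t (by omega : d + 1 - j < 2)]
    obtain rfl | hj : j = d + 1 ∨ d + 3 - j < 2 := by omega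
    · push_cast
      ring
    · rw [solidGeg_of_lt_two μ s t hj]
      ring

variable (n : ℕ) (s t : ℝ)

/-- Multiplication by `s` maps the degree `N` summand to the one of degree `N + 1` up to a
telescoping term. -/
lemma mul_waveCoeff_mul_solidGeg {N j : ℕ} (hj : j ≤ N) :
    s * (waveCoeff (n + 1) N j * (N - 2 * j + n + 1) * t ^ j
          * solidGeg (n + 1) (N + 2 - 2 * j) s t)
      = (N + 1) * (waveCoeff (n + 1) (N + 1) j * ((N + 1 : ℕ) - 2 * j + n + 1) * t ^ j
            * solidGeg (n + 1) (N + 1 + 2 - 2 * j) s t)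
        + ((j + 1 : ℕ) * waveCoeff (n + 1) (N + 1) (j + 1) * t ^ (j + 1)
              * (N - 2 * (j + 1 : ℕ) + 2 * n + 3) * solidGeg (n + 1) (N + 3 - 2 * (j + 1)) s t
          - j * waveCoeff (n + 1) (N + 1) j * t ^ j * (N - 2 * j + 2 * n + 3)
              * solidGeg (n + 1) (N + 3 - 2 * j) s t) := by
  obtain ⟨d, rfl⟩ := Nat.exists_eq_add_of_le hj
  simp only [waveCoeff, Nat.factorial_succ j, show j + d - j = d by omega,
    show j + d + 1 - (j + 1) = d by omega, show j + d + 1 - j = d + 1 by omega,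
    show j + d + 2 - 2 * j = d + 2 - j by omega, show j + d + 1 + 2 - 2 * j = d + 3 - j by omega,
    show j + d + 3 - 2 * (j + 1) = d + 1 - j by omega,
    show d + 1 + (n + 1) = d + (n + 1) + 1 by ring, Nat.factorial_succ (d + (n + 1))]
  push_cast
  field_simp
  linear_combination (2 ^ (j + d) * t ^ j * (d + n + 2)) * solidGeg_recurrence_sub (n + 1) s t d j

lemma sum_waveCoeff_mul_solidGeg : ∀ N : ℕ,
    ∑ j ∈ Finset.range (N + 1),
        waveCoeff (n + 1) N j * (N - 2 * j + n + 1) * t ^ j * solidGeg (n + 1) (N + 2 - 2 * j) s t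
      = (n + 1) * (s ^ N / N.factorial)
  | 0 => by
    simp only [zero_add, Finset.range_one, Finset.sum_singleton, waveCoeff, solidGeg, pow_zero,
      Nat.factorial_zero, Nat.cast_zero, Nat.cast_one, mul_zero, mul_one, one_mul, sub_zero,
      Nat.sub_zero]
    field_simp
  | N + 1 => by
    let boundary (j : ℕ) : ℝ := j * waveCoeff (n + 1) (N + 1) j * t ^ j * (N - 2 * j + 2 * n + 3)
      * solidGeg (n + 1) (N + 3 - 2 * j) s t
    have hstep := Finset.sum_congr (rfl : Finset.range (N + 1) = _) fun j hj =>
      mul_waveCoeff_mul_solidGeg n s t (Finset.mem_range_succ_iff.1 hj)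
    rw [← Finset.mul_sum, sum_waveCoeff_mul_solidGeg N, Finset.sum_add_distrib, ← Finset.mul_sum,
      Finset.sum_range_sub boundary] at hstep
    simp only [boundary] at hstep
    rw [solidGeg_of_lt_two _ s t (by omega : N + 3 - 2 * (N + 1) < 2)] at hstep
    rw [Finset.sum_range_succ,
      solidGeg_of_lt_two _ s t (by omega : N + 1 + 2 - 2 * (N + 1) < 2), Nat.factorial_succ]
    refine mul_left_cancel₀ (Nat.cast_add_one_ne_zero N) ?_
    simp only [Nat.cast_zero, zero_mul, mul_zero, sub_zero, add_zero] at hstep ⊢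
    rw [← hstep]
    push_cast
    field_simp
    ring

/-- Abel summation turns the coefficients of `solidGeg` into those of its second differences. -/
lemma waveCoeff_mul_sub {N j : ℕ} (hj : j ≤ N) :
    waveCoeff n N j * t ^ j
        * (solidGeg (n + 1) (N + 2 - 2 * j) s t - t * solidGeg (n + 1) (N - 2 * j) s t)
      = (n + 1 : ℝ)⁻¹ * (waveCoeff (n + 1) N j * (N - 2 * j + n + 1) * t ^ j
            * solidGeg (n + 1) (N + 2 - 2 * j) s t)
        - (waveCoeff n (N + 1) (j + 1) * 2 * (j + 1 : ℕ) * t ^ (j + 1)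
              * solidGeg (n + 1) (N + 2 - 2 * (j + 1)) s t
            - waveCoeff n (N + 1) j * 2 * j * t ^ j * solidGeg (n + 1) (N + 2 - 2 * j) s t) := by
  obtain ⟨d, rfl⟩ := Nat.exists_eq_add_of_le hj
  simp only [waveCoeff, Nat.factorial_succ j, Nat.factorial_succ n, show j + d - j = d by omega,
    show j + d + 1 - (j + 1) = d by omega, show j + d + 1 - j = d + 1 by omega,
    show j + d + 2 - 2 * (j + 1) = j + d - 2 * j by omega, show d + (n + 1) = d + n + 1 by ring,
    show d + 1 + n = d + n + 1 by ring, Nat.factorial_succ (d + n)]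
  push_cast
  field_simp
  ring

theorem sum_waveCoeff_mul_sub (N : ℕ) :
    ∑ j ∈ Finset.range (N + 1), waveCoeff n N j * t ^ j
        * (solidGeg (n + 1) (N + 2 - 2 * j) s t - t * solidGeg (n + 1) (N - 2 * j) s t)
      = s ^ N / N.factorial := by
  let boundary (j : ℕ) : ℝ :=
    waveCoeff n (N + 1) j * 2 * j * t ^ j * solidGeg (n + 1) (N + 2 - 2 * j) s t
  rw [Finset.sum_congr rfl fun j hj => waveCoeff_mul_sub n s t (Finset.mem_range_succ_iff.1 hj),
    Finset.sum_sub_distrib, ← Finset.mul_sum, sum_waveCoeff_mul_solidGeg,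
    Finset.sum_range_sub boundary, inv_mul_cancel_left₀ (Nat.cast_add_one_ne_zero n)]
  simp [boundary, solidGeg_of_lt_two _ s t (by omega : N + 2 - 2 * (N + 1) < 2)]

end PlaneWaveCoeff

/-! ### Bessel coefficients and the plane wave -/

section PlaneWave

/-- The `j`-th term of the power series of `besselCoeff`. -/
def besselTerm (n k j : ℕ) (t : ℝ) : ℝ := (-1) ^ j * waveCoeff n (k + 2 * j) j * t ^ j

/-- The entire function of `t` with value `2^n n! z^{-(k+n)} J_{k+n}(z)` at `t = z²`. -/
def besselCoeff (n k : ℕ) (t : ℝ) : ℝ := ∑' j, besselTerm n k j t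

lemma waveCoeff_nonneg (n N j : ℕ) : 0 ≤ waveCoeff n N j := by
  unfold waveCoeff
  positivity

lemma waveCoeff_add_two_mul_le (n k j : ℕ) :
    waveCoeff n (k + 2 * j) j ≤ 1 / (j.factorial * k.factorial) := by
  have hfact : (n.factorial * k.factorial : ℝ) ≤ (k + 2 * j - j + n).factorial := by
    have hdvd := Nat.le_of_dvd (Nat.factorial_pos _)
      (Nat.factorial_mul_factorial_dvd_factorial_add n k)
    exact_mod_cast hdvd.trans (Nat.factorial_le (by omega))
  have hpow : (1 : ℝ) ≤ 2 ^ (k + 2 * j) := one_le_pow₀ one_le_two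
  rw [waveCoeff, div_le_div_iff₀ (by positivity) (by positivity)]
  calc (n.factorial * (j.factorial * k.factorial) : ℝ)
      = 1 * j.factorial * (n.factorial * k.factorial) := by ring
    _ ≤ 2 ^ (k + 2 * j) * j.factorial * (k + 2 * j - j + n).factorial := by gcongr
    _ = 1 * (2 ^ (k + 2 * j) * j.factorial * (k + 2 * j - j + n).factorial) := (one_mul _).symm

lemma abs_besselTerm_le (n k j : ℕ) (t : ℝ) :
    |besselTerm n k j t| ≤ |t| ^ j / j.factorial / k.factorial := by
  rw [besselTerm, abs_mul, abs_mul, abs_neg_one_pow, one_mul, abs_pow,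
    abs_of_nonneg (waveCoeff_nonneg _ _ _), div_div, ← one_div_mul_eq_div]
  gcongr
  exact waveCoeff_add_two_mul_le n k j

lemma summable_besselTerm (n k : ℕ) (t : ℝ) : Summable fun j => besselTerm n k j t :=
  .of_norm_bounded ((Real.summable_pow_div_factorial |t|).div_const _)
    fun j => abs_besselTerm_le n k j t

lemma abs_besselCoeff_le (n k : ℕ) (t : ℝ) :
    |besselCoeff n k t| ≤ Real.exp |t| / k.factorial := by
  have hexp := NormedSpace.expSeries_div_hasSum_exp |t|
  rw [← Real.exp_eq_exp_ℝ] at hexp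
  exact tsum_of_norm_bounded (f := fun j => besselTerm n k j t) (hexp.div_const _) fun j =>
    abs_besselTerm_le n k j t

lemma continuous_besselCoeff (n k : ℕ) : Continuous (besselCoeff n k) := by
  refine continuous_iff_continuousAt.2 fun t₀ => ?_
  have hball : Metric.ball (0 : ℝ) (|t₀| + 1) ∈ nhds t₀ :=
    Metric.isOpen_ball.mem_nhds (by simp)
  refine (continuousOn_tsum (fun j => by unfold besselTerm; fun_prop)
    ((Real.summable_pow_div_factorial (|t₀| + 1)).div_const k.factorial)
    fun j t ht => (abs_besselTerm_le n k j t).trans ?_).continuousAt hball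
  rw [mem_ball_zero_iff, Real.norm_eq_abs] at ht
  gcongr

lemma besselCoeff_sq (n k : ℕ) (z : ℝ) :
    besselCoeff n k (z ^ 2) = 2 ^ (n : ℝ) * Real.Gamma (n + 1) * besselJt (k + n) z := by
  rw [besselJt, besselCoeff, ← tsum_mul_left]
  congr 1 with j
  have hidx : k + 2 * j - j + n = j + k + n := by omega
  rw [besselTerm, waveCoeff, hidx, Real.Gamma_nat_eq_factorial,
    show (j : ℝ) + (k + n) + 1 = (j + k + n : ℕ) + 1 by push_cast; ring,
    Real.Gamma_nat_eq_factorial, ← Nat.cast_add, Real.rpow_natCast, Real.rpow_natCast]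
  simp only [pow_add, pow_mul, div_pow]
  field_simp

variable (n : ℕ) (s t : ℝ) (ω : ℂ)

/-- The term of degree `p.1` in `s` and of index `p.2` in the expansion of `exp (ω s)` that results
from expanding every power of `s` in homogeneous Gegenbauer polynomials. -/
def planeWaveTerm (p : ℕ × ℕ) : ℂ :=
  ω ^ p.1 * (waveCoeff n p.1 p.2 * t ^ p.2
    * (solidGeg (n + 1) (p.1 + 2 - 2 * p.2) s t - t * solidGeg (n + 1) (p.1 - 2 * p.2) s t) : ℝ)

lemma planeWaveTerm_eq_zero {N j : ℕ} (h : N < 2 * j) : planeWaveTerm n s t ω (N, j) = 0 := by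
  rw [planeWaveTerm, solidGeg_of_lt_two _ _ _ (by omega : N + 2 - 2 * j < 2),
    solidGeg_of_lt_two _ _ _ (by omega : N - 2 * j < 2)]
  simp

lemma hasSum_planeWaveTerm_fst (N : ℕ) :
    HasSum (fun j => planeWaveTerm n s t ω (N, j)) ((ω * s) ^ N / N.factorial) := by
  have hsum : ∑ j ∈ Finset.range (N + 1), planeWaveTerm n s t ω (N, j)
      = (ω * s) ^ N / N.factorial := by
    simp only [planeWaveTerm]
    rw [← Finset.mul_sum, ← Complex.ofReal_sum, sum_waveCoeff_mul_sub]
    push_cast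
    ring
  rw [← hsum]
  refine hasSum_sum_of_ne_finset_zero fun j hj => planeWaveTerm_eq_zero n s t ω ?_
  rw [Finset.mem_range] at hj
  omega

variable {ω}

lemma planeWaveTerm_add_two_mul (hω : ω ^ 2 = -1) (k j : ℕ) :
    planeWaveTerm n s t ω (k + 2 * j, j)
      = ω ^ k * (besselTerm n k j t
          * (solidGeg (n + 1) (k + 2) s t - t * solidGeg (n + 1) k s t) : ℝ) := by
  have hidx : k + 2 * j + 2 - 2 * j = k + 2 := by omega
  simp only [planeWaveTerm, besselTerm, hidx, Nat.add_sub_cancel, pow_add, pow_mul, hω]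
  push_cast
  ring

lemma norm_eq_one_of_sq_eq_neg_one (hω : ω ^ 2 = -1) : ‖ω‖ = 1 := by
  rw [← pow_eq_one_iff_of_nonneg (norm_nonneg ω) two_ne_zero, ← norm_pow, hω, norm_neg, norm_one]

lemma summable_planeWaveTerm_add_two_mul (hω : ω ^ 2 = -1) :
    Summable fun p : ℕ × ℕ => planeWaveTerm n s t ω (p.1 + 2 * p.2, p.2) := by
  obtain ⟨c, hc, hgeg⟩ := exists_abs_solidGeg_le_pow (n + 1 : ℝ) s t (by positivity)
  refine .of_norm_bounded
    (((Real.summable_pow_div_factorial c).mul_left (c ^ 2 + |t|)).mul_of_nonneg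
      (Real.summable_pow_div_factorial |t|) (fun k => ?_) fun j => ?_) ?_
  · simp only [Pi.zero_apply]
    positivity
  · simp only [Pi.zero_apply]
    positivity
  rintro ⟨k, j⟩
  have hdiff : |solidGeg (n + 1) (k + 2) s t - t * solidGeg (n + 1) k s t|
      ≤ c ^ (k + 2) + |t| * c ^ k := by
    refine (abs_sub _ _).trans ?_
    rw [abs_mul]
    gcongr <;> apply hgeg
  rw [planeWaveTerm_add_two_mul n s t hω, norm_mul, norm_pow, norm_eq_one_of_sq_eq_neg_one hω,
    one_pow, one_mul, Complex.norm_real, norm_mul, Real.norm_eq_abs, Real.norm_eq_abs]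
  calc |besselTerm n k j t| * |solidGeg (n + 1) (k + 2) s t - t * solidGeg (n + 1) k s t|
      ≤ |t| ^ j / j.factorial / k.factorial * (c ^ (k + 2) + |t| * c ^ k) := by
        gcongr
        exact abs_besselTerm_le n k j t
    _ = (c ^ 2 + |t|) * (c ^ k / k.factorial) * (|t| ^ j / j.factorial) := by ring

-- The double series is summed over `j` at fixed `N` and, after `N = k + 2 j`, at fixed `k`.
theorem hasSum_exp_mul (hω : ω ^ 2 = -1) :
    HasSum (fun k : ℕ => ω ^ k * (besselCoeff n k t
        * (solidGeg (n + 1) (k + 2) s t - t * solidGeg (n + 1) k s t) : ℝ))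
      (Complex.exp (ω * s)) := by
  let shift : ℕ × ℕ → ℕ × ℕ := fun p => (p.1 + 2 * p.2, p.2)
  have hshift : Function.Injective shift := by
    rintro ⟨k, j⟩ ⟨k', j'⟩ h
    simp only [shift, Prod.mk.injEq] at h ⊢
    omega
  have hrange : ∀ p ∉ Set.range shift, planeWaveTerm n s t ω p = 0 := by
    rintro ⟨N, j⟩ h
    refine planeWaveTerm_eq_zero n s t ω (not_le.1 fun hle => h ⟨(N - 2 * j, j), ?_⟩)
    simp only [shift, Prod.mk.injEq, and_true]
    omega
  have hsum := (summable_planeWaveTerm_add_two_mul n s t hω).hasSum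
  have hdegree := ((hshift.hasSum_iff hrange).1 hsum).prod_fiberwise
    (hasSum_planeWaveTerm_fst n s t ω)
  have hexp := NormedSpace.expSeries_div_hasSum_exp (ω * (s : ℂ))
  rw [← Complex.exp_eq_exp_ℂ] at hexp
  rw [← hdegree.unique hexp]
  refine hsum.prod_fiberwise fun k => ?_
  simp only [planeWaveTerm_add_two_mul n s t hω]
  refine HasSum.mul_left _ ?_
  exact_mod_cast (summable_besselTerm n k t).hasSum.mul_right _

end PlaneWave

/-! ### The series of the Clifford–Fourier kernel -/

section KernelSeries

lemma ip_sq_le (x y : Fin m → ℝ) : ip x y ^ 2 ≤ ip x x * ip y y := by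
  simpa only [ip, pow_two] using Finset.sum_mul_sq_le_sq_mul_sq Finset.univ x y

lemma nrm_mul_nrm_sq (x y : Fin m → ℝ) : (nrm x * nrm y) ^ 2 = ip x x * ip y y := by
  rw [mul_pow, nrm, nrm, Real.sq_sqrt (ip_self_nonneg x), Real.sq_sqrt (ip_self_nonneg y)]

lemma nrm_mul_nrm_mul_div (x y : Fin m → ℝ) :
    nrm x * nrm y * (ip x y / (nrm x * nrm y)) = ip x y := by
  refine mul_div_cancel_of_imp' fun h => ?_
  have hsq := ip_sq_le x y
  rw [← nrm_mul_nrm_sq, h, zero_pow two_ne_zero] at hsq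
  exact pow_eq_zero_iff two_ne_zero |>.1 (le_antisymm hsq (sq_nonneg _))

lemma summable_besselCoeff_mul_solidGeg (n i : ℕ) (s t : ℝ) :
    Summable fun k => besselCoeff n k t * solidGeg (n + 1) (k + i) s t := by
  obtain ⟨c, _, hgeg⟩ := exists_abs_solidGeg_le_pow (n + 1 : ℝ) s t (by positivity)
  refine .of_norm_bounded
    ((Real.summable_pow_div_factorial c).mul_left (Real.exp |t| * c ^ i)) fun k => ?_
  rw [norm_mul, Real.norm_eq_abs, Real.norm_eq_abs]
  calc |besselCoeff n k t| * |solidGeg (n + 1) (k + i) s t|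
      ≤ Real.exp |t| / k.factorial * c ^ (k + i) := by
        gcongr
        exacts [abs_besselCoeff_le n k t, hgeg (k + i)]
    _ = Real.exp |t| * c ^ i * (c ^ k / k.factorial) := by ring

lemma summable_add_neg_one_pow_mul (u : ℂ) {f : ℕ → ℝ} (hf : Summable f) :
    Summable fun k => (u + (-1) ^ k) * (f k : ℂ) := by
  refine .of_norm_bounded (hf.abs.mul_left (‖u‖ + 1)) fun k => ?_
  rw [norm_mul, Complex.norm_real, Real.norm_eq_abs]
  gcongr
  exact (norm_add_le _ _).trans (by simp)

variable (n : ℕ) (u : ℂ) (w z : ℝ)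

lemma hasSum_AfunR :
    HasSum (fun k : ℕ => (u + (-1) ^ k) * (besselCoeff n k (z ^ 2) / 2
        * (solidGeg (n + 1) (k + 2) (z * w) (z ^ 2)
          - 2 * (z * w) * solidGeg (n + 1) (k + 1) (z * w) (z ^ 2)
          + z ^ 2 * solidGeg (n + 1) k (z * w) (z ^ 2)) : ℝ))
      (AfunR u n w z) := by
  have hE := fun i => summable_besselCoeff_mul_solidGeg n i (z * w) (z ^ 2)
  have hsum := ((hE 2).sub ((hE 1).mul_left (2 * (z * w)))).add ((hE 0).mul_left (z ^ 2))
  convert (summable_add_neg_one_pow_mul u ((hsum.div_const 2).congr fun k => ?_)).hasSum using 1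
  · rw [AfunR, ← tsum_mul_left]
    congr 1 with k
    rw [← pow_mul_geg_eq_solidGeg_succ, besselCoeff_sq, Real.rpow_sub_one two_ne_zero]
    push_cast
    ring
  · simp only [add_zero]
    ring

lemma hasSum_BfunR :
    HasSum (fun k : ℕ => (-u + (-1) ^ k) * (besselCoeff n k (z ^ 2) / 2
        * (solidGeg (n + 1) (k + 2) (z * w) (z ^ 2)
          - z ^ 2 * solidGeg (n + 1) k (z * w) (z ^ 2)) : ℝ))
      (BfunR u n w z) := by
  have hE := fun i => summable_besselCoeff_mul_solidGeg n i (z * w) (z ^ 2)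
  have hsum := (hE 2).sub ((hE 0).mul_left (z ^ 2))
  convert (summable_add_neg_one_pow_mul (-u) ((hsum.div_const 2).congr fun k => ?_)).hasSum using 1
  · rw [BfunR, ← tsum_mul_left]
    congr 1 with k
    rw [← pow_mul_gegT, besselCoeff_sq, Real.rpow_sub_one two_ne_zero]
    push_cast
    ring
  · simp only [add_zero]
    ring

lemma hasSum_CfunR :
    HasSum (fun k : ℕ => (u + (-1) ^ k) * (-(besselCoeff n k (z ^ 2)
        * solidGeg (n + 1) (k + 1) (z * w) (z ^ 2)) : ℝ))
      (CfunR u n w z) := by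
  have hE := summable_besselCoeff_mul_solidGeg n 1 (z * w) (z ^ 2)
  convert (summable_add_neg_one_pow_mul u hE.neg).hasSum using 1
  rw [CfunR, ← tsum_mul_left]
  congr 1 with k
  rw [← pow_pred_mul_geg_pred, besselCoeff_sq]
  push_cast
  ring

end KernelSeries

section KernelTerm

attribute [local instance] clRing clComplexAlgebra clRealAlgebra clNormedSpace clIsScalarTower
  clFiniteDimensional clContinuousMul

/-- The reproducing kernel of inner spherical monogenics of degree `k`, up to a factor, for
`m = 2 μ`. -/
def innerZonal (μ : ℝ) (k : ℕ) (x y : Fin m → ℝ) : Cl m :=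
  zonal (solidGeg μ (k + 2)) (solidGeg μ (k + 1)) x y

/-- The complement of `innerZonal μ k` in the solid harmonic of degree `k`; it stems from
spherical monogenics of degree `k - 1` multiplied by the vector variable. -/
def outerZonal (μ : ℝ) (k : ℕ) (x y : Fin m → ℝ) : Cl m :=
  zonal (fun s t => -(t * solidGeg μ k s t)) (fun s t => -solidGeg μ (k + 1) s t) x y

/-- The degree `k` term of a series in `innerZonal` and `outerZonal` with the Bessel coefficients
of the plane wave and with phases `α`, `β`. -/
def kernelTerm (n : ℕ) (α β : ℂ) (k : ℕ) (x y : Fin m → ℝ) : Cl m :=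
  besselCoeff n k (ip x x * ip y y)
    • (α • innerZonal (n + 1) k x y + β • outerZonal (n + 1) k x y)

theorem hasSum_kernelTerm_exp (n : ℕ) {ω : ℂ} (hω : ω ^ 2 = -1) (x y : Fin m → ℝ) :
    HasSum (fun k => kernelTerm n (ω ^ k) (ω ^ k) k x y)
      (Complex.exp (ω * ip x y) • (1 : Cl m)) := by
  convert (hasSum_exp_mul n (ip x y) (ip x x * ip y y) hω).smul_const (1 : Cl m) using 1
  funext k
  simp only [kernelTerm, innerZonal, outerZonal, zonal, zonalCoeff]
  push_cast
  module

lemma I_pow_two_mul_add_two (n : ℕ) : Complex.I ^ (2 * n + 2) = -(-1) ^ n := by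
  rw [pow_add, pow_mul, Complex.I_sq, mul_neg_one]

theorem hasSum_kernelTerm_Kminus {n : ℕ} (hm : m = 2 * n + 2) (x y : Fin m → ℝ) :
    HasSum (fun k => kernelTerm n ((-1) ^ k) ((-1) ^ n) k x y) (Kminus m x y) := by
  have hphase : Complex.I ^ m = -(-1) ^ n := hm ▸ I_pow_two_mul_add_two n
  have horder : ((m : ℝ) - 2) / 2 = n := by rw [hm]; push_cast; ring
  have hvec : vec m y * vec m x = -wedge m x y - ip x y • 1 := by
    rw [wedge_eq_sub, neg_sub, sub_neg_eq_add, add_sub_cancel_left]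
  rw [Kminus, horder, hphase]
  convert (((hasSum_AfunR n _ _ _).add (hasSum_BfunR n _ _ _)).smul_const (1 : Cl m)).add
    ((hasSum_CfunR n _ _ _).smul_const (wedge m x y)) using 1
  funext k
  simp only [kernelTerm, innerZonal, outerZonal, zonal, zonalCoeff, hvec, nrm_mul_nrm_mul_div,
    nrm_mul_nrm_sq]
  push_cast
  module

lemma norm_zonal_le {p q : ℝ → ℝ → ℝ} {x y : Fin m → ℝ} {B : ℝ} (hp : |zonalCoeff p x y| ≤ B)
    (hq : |zonalCoeff q x y| ≤ B) :
    ‖zonal p q x y‖ ≤ B * (‖(1 : Cl m)‖ + ‖vec m y * vec m x‖) := by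
  refine (norm_add_le _ _).trans ?_
  rw [norm_smul, norm_smul, Real.norm_eq_abs, Real.norm_eq_abs, mul_add]
  gcongr

lemma norm_innerZonal_outerZonal_le {μ Z : ℝ} (hμ : 0 ≤ μ) (hZ : 1 ≤ Z) {x y : Fin m → ℝ}
    (hxy : ip x x * ip y y ≤ Z ^ 2) (k : ℕ) :
    ‖innerZonal μ k x y‖
        ≤ ((4 + 4 * μ) * Z) ^ (k + 2) * (‖(1 : Cl m)‖ + ‖vec m y * vec m x‖) ∧
      ‖outerZonal μ k x y‖
        ≤ ((4 + 4 * μ) * Z) ^ (k + 2) * (‖(1 : Cl m)‖ + ‖vec m y * vec m x‖) := by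
  have ht : |ip x x * ip y y| ≤ Z ^ 2 := by
    rwa [abs_of_nonneg (mul_nonneg (ip_self_nonneg x) (ip_self_nonneg y))]
  have hs : |ip x y| ≤ Z := abs_le_of_sq_le_sq ((ip_sq_le x y).trans hxy) (by linarith)
  have hgeg := abs_solidGeg_le hμ hZ hs ht
  have hc : Z ≤ (4 + 4 * μ) * Z := le_mul_of_one_le_left (by linarith) (by linarith)
  have hodd : |solidGeg μ (k + 1) (ip x y) (ip x x * ip y y)| ≤ ((4 + 4 * μ) * Z) ^ (k + 2) :=
    (hgeg (k + 1)).trans (pow_le_pow_right₀ (hZ.trans hc) (by omega))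
  refine ⟨norm_zonal_le (hgeg (k + 2)) hodd, norm_zonal_le ?_ (by rwa [zonalCoeff, abs_neg])⟩
  rw [zonalCoeff, abs_neg, abs_mul, pow_add, mul_comm]
  gcongr
  · exact hgeg k
  · exact ht.trans (by gcongr)

lemma norm_kernelTerm_le (n : ℕ) {α β : ℂ} (hα : ‖α‖ ≤ 1) (hβ : ‖β‖ ≤ 1) {Z M : ℝ} (hZ : 1 ≤ Z)
    {x y : Fin m → ℝ} (hxy : ip x x * ip y y ≤ Z ^ 2) (hM : ‖vec m y * vec m x‖ ≤ M) (k : ℕ) :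
    ‖kernelTerm n α β k x y‖
      ≤ 2 * Real.exp (Z ^ 2) * (‖(1 : Cl m)‖ + M) * ((4 + 4 * (n + 1)) * Z) ^ 2
        * (((4 + 4 * (n + 1)) * Z) ^ k / k.factorial) := by
  obtain ⟨hinner, houter⟩ := norm_innerZonal_outerZonal_le (μ := n + 1) (by positivity) hZ hxy k
  have hbessel : |besselCoeff n k (ip x x * ip y y)| ≤ Real.exp (Z ^ 2) / k.factorial := by
    refine (abs_besselCoeff_le n k _).trans ?_
    rw [abs_of_nonneg (mul_nonneg (ip_self_nonneg x) (ip_self_nonneg y))]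
    gcongr
  set D := ((4 + 4 * (n + 1)) * Z) ^ (k + 2) * (‖(1 : Cl m)‖ + ‖vec m y * vec m x‖)
  have hsum : ‖α • innerZonal (n + 1) k x y + β • outerZonal (n + 1) k x y‖ ≤ 1 * D + 1 * D := by
    refine (norm_add_le _ _).trans ?_
    rw [norm_smul, norm_smul]
    gcongr
  rw [kernelTerm, norm_smul, Real.norm_eq_abs]
  calc |besselCoeff n k (ip x x * ip y y)|
        * ‖α • innerZonal (n + 1) k x y + β • outerZonal (n + 1) k x y‖
      ≤ Real.exp (Z ^ 2) / k.factorial * (1 * D + 1 * D) := by gcongr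
    _ = 2 * Real.exp (Z ^ 2) * (‖(1 : Cl m)‖ + ‖vec m y * vec m x‖) * ((4 + 4 * (n + 1)) * Z) ^ 2
        * (((4 + 4 * (n + 1)) * Z) ^ k / k.factorial) := by ring
    _ ≤ _ := by gcongr

theorem exists_summable_norm_kernelTerm_le (m n : ℕ) (R : ℝ) :
    ∃ b : ℕ → ℝ, Summable b ∧ ∀ (α β : ℂ), ‖α‖ ≤ 1 → ‖β‖ ≤ 1 → ∀ k,
      ∀ x ∈ solidBall m R, ∀ y ∈ solidBall m R, ‖kernelTerm n α β k x y‖ ≤ b k := by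
  have hcont : Continuous fun p : (Fin m → ℝ) × (Fin m → ℝ) => vec m p.2 * vec m p.1 :=
    (continuous_vec.comp continuous_snd).mul (continuous_vec.comp continuous_fst)
  obtain ⟨M, hM⟩ := ((isCompact_solidBall R).prod
    (isCompact_solidBall R)).exists_bound_of_continuousOn hcont.continuousOn
  refine ⟨_, (Real.summable_pow_div_factorial ((4 + 4 * (n + 1)) * (1 + |R|))).mul_left _,
    fun α β hα hβ k x hx y hy =>
      norm_kernelTerm_le n hα hβ (by linarith [abs_nonneg R]) ?_ (hM (x, y) ⟨hx, hy⟩) k⟩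
  have hx' : ip x x ≤ 1 + |R| := (hx.trans (le_abs_self R)).trans (by linarith)
  have hy' : ip y y ≤ 1 + |R| := (hy.trans (le_abs_self R)).trans (by linarith)
  rw [sq]
  exact mul_le_mul hx' hy' (ip_self_nonneg y) (by positivity)

lemma continuous_innerZonal (μ : ℝ) (k : ℕ) :
    Continuous fun p : (Fin m → ℝ) × (Fin m → ℝ) => innerZonal μ k p.1 p.2 :=
  (contDiff_zonal (contDiff_solidGeg (r := 0) _) (contDiff_solidGeg _)).continuous

lemma continuous_outerZonal (μ : ℝ) (k : ℕ) :
    Continuous fun p : (Fin m → ℝ) × (Fin m → ℝ) => outerZonal μ k p.1 p.2 :=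
  (contDiff_zonal (k := 0) (contDiff_snd.mul (contDiff_solidGeg _)).neg
    (contDiff_solidGeg _).neg).continuous

lemma continuous_kernelTerm (n : ℕ) (α β : ℂ) (k : ℕ) :
    Continuous fun p : (Fin m → ℝ) × (Fin m → ℝ) => kernelTerm n α β k p.1 p.2 := by
  have hip : Continuous fun p : (Fin m → ℝ) × (Fin m → ℝ) => ip p.1 p.1 * ip p.2 p.2 :=
    (continuous_ip.comp (continuous_fst.prodMk continuous_fst)).mul
      (continuous_ip.comp (continuous_snd.prodMk continuous_snd))
  exact ((continuous_besselCoeff n k).comp hip).smul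
    (((continuous_innerZonal _ k).const_smul α).add ((continuous_outerZonal _ k).const_smul β))

theorem continuous_Kminus {n : ℕ} (hm : m = 2 * n + 2) :
    Continuous fun p : (Fin m → ℝ) × (Fin m → ℝ) => Kminus m p.1 p.2 := by
  refine continuous_iff_continuousAt.2 fun p₀ => ?_
  let R := max (ip p₀.1 p₀.1) (ip p₀.2 p₀.2) + 1
  have hnhds : ∀ z : Fin m → ℝ, ip z z < R → solidBall m R ∈ nhds z := fun z hz =>
    Filter.mem_of_superset ((isOpen_lt (continuous_ip.comp (continuous_id.prodMk continuous_id))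
      continuous_const).mem_nhds hz) fun ξ (hξ : ip ξ ξ < R) => hξ.le
  obtain ⟨b, hb, hbound⟩ := exists_summable_norm_kernelTerm_le m n R
  simp only [← (hasSum_kernelTerm_Kminus hm _ _).tsum_eq]
  refine (continuousOn_tsum (fun k => (continuous_kernelTerm n _ _ k).continuousOn) hb
    fun k p hp => hbound _ _ (by simp) (by simp) k p.1 hp.1 p.2 hp.2).continuousAt
    (prod_mem_nhds (hnhds _ (lt_add_of_le_of_pos (le_max_left _ _) one_pos))
      (hnhds _ (lt_add_of_le_of_pos (le_max_right _ _) one_pos)))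

end KernelTerm

/-! ### Exchanging the kernel for the plane wave on balls -/

section Ball

attribute [local instance] clRing clComplexAlgebra clRealAlgebra clNormedSpace clIsScalarTower
  clFiniteDimensional clContinuousMul

lemma outerZonal_zero (μ : ℝ) (x y : Fin m → ℝ) : outerZonal μ 0 x y = 0 := by
  simp [outerZonal, zonal, zonalCoeff, solidGeg]

variable {μ R : ℝ} {h : (Fin m → ℝ) → ℂ} {k l : ℕ}

lemma setIntegral_innerZonal_mul_innerZonal_eq_zero (hm : (m : ℝ) = 2 * μ) (hrad : IsRadial h)
    (hint : IntegrableOn h (solidBall m R)) (hkl : k ≠ l) (x y : Fin m → ℝ) :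
    ∫ ξ in solidBall m R, h ξ • (innerZonal μ k ξ x * innerZonal μ l y ξ) = 0 :=
  (gammaEigenpair_solidGeg hm k).setIntegral_zonal_mul_zonal_eq_zero
    (gammaEigenpair_solidGeg hm l) (by simpa using hkl) hrad hint x y

lemma setIntegral_outerZonal_mul_outerZonal_eq_zero (hm : (m : ℝ) = 2 * μ) (hrad : IsRadial h)
    (hint : IntegrableOn h (solidBall m R)) (hkl : k ≠ l) (x y : Fin m → ℝ) :
    ∫ ξ in solidBall m R, h ξ • (outerZonal μ k ξ x * outerZonal μ l y ξ) = 0 :=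
  (gammaEigenpair_neg_mul_solidGeg hm k).setIntegral_zonal_mul_zonal_eq_zero
    (gammaEigenpair_neg_mul_solidGeg hm l) (by simpa using hkl) hrad hint x y

lemma neg_natCast_ne_add_sub_two {k l : ℕ} (hm : 2 ≤ m) (hl : l ≠ 0) :
    -(k : ℝ) ≠ l + m - 2 := by
  have hm' : (2 : ℝ) ≤ m := mod_cast hm
  have hl' : (0 : ℝ) < l := mod_cast Nat.pos_of_ne_zero hl
  exact ne_of_lt (by linarith [k.cast_nonneg (α := ℝ)])

lemma setIntegral_innerZonal_mul_outerZonal_eq_zero (hm : (m : ℝ) = 2 * μ) (hm₂ : 2 ≤ m)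
    (hrad : IsRadial h) (hint : IntegrableOn h (solidBall m R)) (k l : ℕ) (x y : Fin m → ℝ) :
    ∫ ξ in solidBall m R, h ξ • (innerZonal μ k ξ x * outerZonal μ l y ξ) = 0 := by
  rcases eq_or_ne l 0 with rfl | hl
  · simp [outerZonal_zero]
  · exact (gammaEigenpair_solidGeg hm k).setIntegral_zonal_mul_zonal_eq_zero
      (gammaEigenpair_neg_mul_solidGeg hm l) (neg_natCast_ne_add_sub_two hm₂ hl) hrad hint x y

lemma setIntegral_outerZonal_mul_innerZonal_eq_zero (hm : (m : ℝ) = 2 * μ) (hm₂ : 2 ≤ m)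
    (hrad : IsRadial h) (hint : IntegrableOn h (solidBall m R)) (k l : ℕ) (x y : Fin m → ℝ) :
    ∫ ξ in solidBall m R, h ξ • (outerZonal μ k ξ x * innerZonal μ l y ξ) = 0 := by
  rcases eq_or_ne k 0 with rfl | hk
  · simp [outerZonal_zero]
  · exact (gammaEigenpair_neg_mul_solidGeg hm k).setIntegral_zonal_mul_zonal_eq_zero
      (gammaEigenpair_solidGeg hm l) (neg_natCast_ne_add_sub_two hm₂ hk).symm hrad hint x y

/-- The weight `h` multiplied by the Bessel coefficients of two kernel terms, which are radial
in `ξ`. -/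
def besselWeight (h : (Fin m → ℝ) → ℂ) (n k l : ℕ) (x y ξ : Fin m → ℝ) : ℂ :=
  h ξ • (besselCoeff n k (ip ξ ξ * ip x x) * besselCoeff n l (ip y y * ip ξ ξ) : ℝ)

lemma isRadial_besselWeight (hrad : IsRadial h) (n k l : ℕ) (x y : Fin m → ℝ) :
    IsRadial (besselWeight h n k l x y) := fun ξ η hξη => by
  rw [besselWeight, besselWeight, hrad ξ η hξη, hξη]

lemma integrableOn_besselWeight (hint : IntegrableOn h (solidBall m R)) (n k l : ℕ)
    (x y : Fin m → ℝ) : IntegrableOn (besselWeight h n k l x y) (solidBall m R) := by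
  have hip : Continuous fun ξ : Fin m → ℝ => ip ξ ξ :=
    continuous_ip.comp (continuous_id.prodMk continuous_id)
  exact integrableOn_smul_of_continuous hint (Complex.continuous_ofReal.comp
    (((continuous_besselCoeff n k).comp (hip.mul continuous_const)).mul
      ((continuous_besselCoeff n l).comp (continuous_const.mul hip))))

lemma smul_kernelTerm_mul_kernelTerm (h : (Fin m → ℝ) → ℂ) (n : ℕ) (α β α' β' : ℂ) (k l : ℕ)
    (x y ξ : Fin m → ℝ) :
    h ξ • (kernelTerm n α β k ξ x * kernelTerm n α' β' l y ξ)
      = (α * α') • besselWeight h n k l x y ξ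
            • (innerZonal (n + 1) k ξ x * innerZonal (n + 1) l y ξ)
        + (α * β') • besselWeight h n k l x y ξ
            • (innerZonal (n + 1) k ξ x * outerZonal (n + 1) l y ξ)
        + (β * α') • besselWeight h n k l x y ξ
            • (outerZonal (n + 1) k ξ x * innerZonal (n + 1) l y ξ)
        + (β * β') • besselWeight h n k l x y ξ
            • (outerZonal (n + 1) k ξ x * outerZonal (n + 1) l y ξ) := by
  simp only [kernelTerm, besselWeight, smul_mul_assoc, mul_smul_comm, mul_add, add_mul]
  push_cast
  module

lemma setIntegral_kernelTerm_mul_kernelTerm {n : ℕ} (hm : m = 2 * n + 2) (hrad : IsRadial h)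
    (hint : IntegrableOn h (solidBall m R)) (α β α' β' : ℂ) (k l : ℕ) (x y : Fin m → ℝ) :
    ∫ ξ in solidBall m R, h ξ • (kernelTerm n α β k ξ x * kernelTerm n α' β' l y ξ)
      = (α * α') • (∫ ξ in solidBall m R, besselWeight h n k l x y ξ
            • (innerZonal (n + 1) k ξ x * innerZonal (n + 1) l y ξ))
        + (β * β') • ∫ ξ in solidBall m R, besselWeight h n k l x y ξ
            • (outerZonal (n + 1) k ξ x * outerZonal (n + 1) l y ξ) := by
  have hμ : (m : ℝ) = 2 * (n + 1) := by rw [hm]; push_cast; ring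
  have hwrad := isRadial_besselWeight hrad n k l x y
  have hwint := integrableOn_besselWeight hint n k l x y
  have hsmul {Φ Ψ : (Fin m → ℝ) → (Fin m → ℝ) → Cl m}
      (hΦ : Continuous fun p : (Fin m → ℝ) × (Fin m → ℝ) => Φ p.1 p.2)
      (hΨ : Continuous fun p : (Fin m → ℝ) × (Fin m → ℝ) => Ψ p.1 p.2) (a : ℂ) :
      Integrable (fun ξ => a • besselWeight h n k l x y ξ • (Φ ξ x * Ψ y ξ))
        (volume.restrict (solidBall m R)) :=
    (integrableOn_smul_of_continuous hwint
      (hΦ.along_fst.mul hΨ.along_snd)).fun_smul a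
  have hi (k : ℕ) := continuous_innerZonal (m := m) (n + 1) k
  have ho (k : ℕ) := continuous_outerZonal (m := m) (n + 1) k
  simp only [smul_kernelTerm_mul_kernelTerm]
  rw [integral_add (((hsmul (hi k) (hi l) _).fun_add (hsmul (hi k) (ho l) _)).fun_add
      (hsmul (ho k) (hi l) _)) (hsmul (ho k) (ho l) _),
    integral_add ((hsmul (hi k) (hi l) _).fun_add (hsmul (hi k) (ho l) _)) (hsmul (ho k) (hi l) _),
    integral_add (hsmul (hi k) (hi l) _) (hsmul (hi k) (ho l) _)]
  simp only [integral_smul]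
  rw [setIntegral_innerZonal_mul_outerZonal_eq_zero hμ (by omega) hwrad hwint,
    setIntegral_outerZonal_mul_innerZonal_eq_zero hμ (by omega) hwrad hwint,
    smul_zero, smul_zero, add_zero, add_zero]

-- The right-hand side no longer depends on the phases: off the diagonal both integrals vanish.
lemma setIntegral_kernelTerm_mul_kernelTerm_inv {n : ℕ} (hm : m = 2 * n + 2) (hrad : IsRadial h)
    (hint : IntegrableOn h (solidBall m R)) {α β : ℕ → ℂ} (hα : ∀ k, α k ≠ 0) (hβ : ∀ k, β k ≠ 0)
    (k l : ℕ) (x y : Fin m → ℝ) :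
    ∫ ξ in solidBall m R,
        h ξ • (kernelTerm n (α k) (β k) k ξ x * kernelTerm n (α l)⁻¹ (β l)⁻¹ l y ξ)
      = (∫ ξ in solidBall m R, besselWeight h n k l x y ξ
            • (innerZonal (n + 1) k ξ x * innerZonal (n + 1) l y ξ))
        + ∫ ξ in solidBall m R, besselWeight h n k l x y ξ
            • (outerZonal (n + 1) k ξ x * outerZonal (n + 1) l y ξ) := by
  rw [setIntegral_kernelTerm_mul_kernelTerm hm hrad hint]
  rcases eq_or_ne k l with rfl | hkl
  · rw [mul_inv_cancel₀ (hα k), mul_inv_cancel₀ (hβ k), one_smul, one_smul]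
  · have hμ : (m : ℝ) = 2 * (n + 1) := by rw [hm]; push_cast; ring
    have hwrad := isRadial_besselWeight hrad n k l x y
    have hwint := integrableOn_besselWeight hint n k l x y
    rw [setIntegral_innerZonal_mul_innerZonal_eq_zero hμ hwrad hwint hkl,
      setIntegral_outerZonal_mul_outerZonal_eq_zero hμ hwrad hwint hkl, smul_zero, smul_zero]

lemma norm_mul_le_of_norm_le {a a' : Cl m} {c c' : ℝ} (ha : ‖a‖ ≤ c) (ha' : ‖a'‖ ≤ c') :
    ‖a * a'‖ ≤ ‖mulCLM (m := m)‖ * (c * c') := by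
  refine (norm_mul_le_mulCLM a a').trans ?_
  rw [mul_assoc]
  have hc := (norm_nonneg a).trans ha
  gcongr

lemma hasSum_mul_of_norm_le {f g : ℕ → Cl m} {a a' : Cl m} {b : ℕ → ℝ} (hf : HasSum f a)
    (hg : HasSum g a') (hb : Summable b) (hfb : ∀ k, ‖f k‖ ≤ b k) (hgb : ∀ k, ‖g k‖ ≤ b k) :
    HasSum (fun p : ℕ × ℕ => f p.1 * g p.2) (a * a') := by
  have : IsTopologicalSemiring (Cl m) := {}
  have hb₀ : ∀ k, 0 ≤ b k := fun k => (norm_nonneg _).trans (hfb k)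
  exact hf.mul hg (.of_norm_bounded ((hb.mul_of_nonneg hb hb₀ hb₀).mul_left _)
    fun p => norm_mul_le_of_norm_le (hfb p.1) (hgb p.2))

lemma hasSum_integral_smul_mul {X : Type*} [MeasurableSpace X] {ν : Measure X} {h : X → ℂ}
    {f g : ℕ → X → Cl m} {Φ Ψ : X → Cl m} {b : ℕ → ℝ} (hint : Integrable h ν)
    (hf : ∀ k, AEStronglyMeasurable (f k) ν) (hg : ∀ k, AEStronglyMeasurable (g k) ν)
    (hΦ : ∀ ξ, HasSum (f · ξ) (Φ ξ)) (hΨ : ∀ ξ, HasSum (g · ξ) (Ψ ξ)) (hb : Summable b)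
    (hbound : ∀ᵐ ξ ∂ν, ∀ k, ‖f k ξ‖ ≤ b k ∧ ‖g k ξ‖ ≤ b k) :
    HasSum (fun p : ℕ × ℕ => ∫ ξ, h ξ • (f p.1 ξ * g p.2 ξ) ∂ν) (∫ ξ, h ξ • (Φ ξ * Ψ ξ) ∂ν) := by
  refine hasSum_integral_of_dominated_convergence
    (fun p ξ => ‖h ξ‖ * (‖mulCLM (m := m)‖ * (b p.1 * b p.2)))
    (fun p => hint.aestronglyMeasurable.smul ((hf p.1).mul (hg p.2))) (fun p => ?_) ?_ ?_ ?_
  · filter_upwards [hbound] with ξ hξ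
    rw [norm_smul]
    gcongr
    exact norm_mul_le_of_norm_le (hξ p.1).1 (hξ p.2).2
  · filter_upwards [hbound] with ξ hξ
    have hb₀ : ∀ k, 0 ≤ b k := fun k => (norm_nonneg _).trans (hξ k).1
    exact ((hb.mul_of_nonneg hb hb₀ hb₀).mul_left _).mul_left _
  · simp only [tsum_mul_left]
    exact hint.norm.mul_const _
  · filter_upwards [hbound] with ξ hξ
    exact (hasSum_mul_of_norm_le (hΦ ξ) (hΨ ξ) hb (fun k => (hξ k).1)
      fun k => (hξ k).2).const_smul (h ξ)

theorem hasSum_setIntegral_of_hasSum_kernelTerm {n : ℕ} (hm : m = 2 * n + 2) (hrad : IsRadial h)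
    (hint : IntegrableOn h (solidBall m R)) {α β : ℕ → ℂ} (hα : ∀ k, ‖α k‖ = 1)
    (hβ : ∀ k, ‖β k‖ = 1) {x y : Fin m → ℝ} {Φ Ψ : (Fin m → ℝ) → Cl m}
    (hΦ : ∀ ξ, HasSum (fun k => kernelTerm n (α k) (β k) k ξ x) (Φ ξ))
    (hΨ : ∀ ξ, HasSum (fun k => kernelTerm n (α k)⁻¹ (β k)⁻¹ k y ξ) (Ψ ξ)) :
    HasSum (fun p : ℕ × ℕ =>
        (∫ ξ in solidBall m R, besselWeight h n p.1 p.2 x y ξ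
            • (innerZonal (n + 1) p.1 ξ x * innerZonal (n + 1) p.2 y ξ))
          + ∫ ξ in solidBall m R, besselWeight h n p.1 p.2 x y ξ
            • (outerZonal (n + 1) p.1 ξ x * outerZonal (n + 1) p.2 y ξ))
      (∫ ξ in solidBall m R, h ξ • (Φ ξ * Ψ ξ)) := by
  obtain ⟨b, hb, hbound⟩ :=
    exists_summable_norm_kernelTerm_le m n (max R (max (ip x x) (ip y y)))
  have hx : x ∈ solidBall m (max R (max (ip x x) (ip y y))) := by simp [solidBall]
  have hy : y ∈ solidBall m (max R (max (ip x x) (ip y y))) := by simp [solidBall]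
  have hsum := hasSum_integral_smul_mul hint
    (fun k => (continuous_kernelTerm n (α k) (β k) k).along_fst.aestronglyMeasurable)
    (fun k => (continuous_kernelTerm n (α k)⁻¹ (β k)⁻¹ k).along_snd.aestronglyMeasurable)
    hΦ hΨ hb ?_
  · refine hsum.congr_fun fun p => ?_
    exact (setIntegral_kernelTerm_mul_kernelTerm_inv hm hrad hint
      (fun k => norm_ne_zero_iff.1 (hα k ▸ one_ne_zero))
      (fun k => norm_ne_zero_iff.1 (hβ k ▸ one_ne_zero)) p.1 p.2 x y).symm
  · filter_upwards [ae_restrict_mem (measurableSet_solidBall R)] with ξ hξ k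
    have hξ' : ξ ∈ solidBall m (max R (max (ip x x) (ip y y))) :=
      le_max_of_le_left (show ip ξ ξ ≤ R from hξ)
    exact ⟨hbound _ _ (hα k).le (hβ k).le k ξ hξ' x hx,
      hbound _ _ (by simp [hα]) (by simp [hβ]) k y hy ξ hξ'⟩

theorem setIntegral_smul_Kminus_mul_Kminus {n : ℕ} (hm : m = 2 * n + 2) (hrad : IsRadial h)
    (hint : IntegrableOn h (solidBall m R)) (x y : Fin m → ℝ) :
    ∫ ξ in solidBall m R, h ξ • (Kminus m ξ x * Kminus m y ξ)
      = (∫ ξ in solidBall m R, h ξ * Complex.exp (Complex.I * (ip ξ x - ip y ξ))) • (1 : Cl m) := by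
  have hkernel := hasSum_setIntegral_of_hasSum_kernelTerm hm hrad hint
    (α := fun k => (-1) ^ k) (β := fun _ => (-1) ^ n) (by simp) (by simp)
    (fun ξ => hasSum_kernelTerm_Kminus hm ξ x)
    (fun ξ => by simpa [← inv_pow, inv_neg_one] using hasSum_kernelTerm_Kminus hm y ξ)
  have hwave := hasSum_setIntegral_of_hasSum_kernelTerm hm hrad hint
    (α := fun k => Complex.I ^ k) (β := fun k => Complex.I ^ k) (by simp) (by simp)
    (fun ξ => hasSum_kernelTerm_exp n Complex.I_sq ξ x)
    (fun ξ => by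
      simpa [← inv_pow] using hasSum_kernelTerm_exp n (ω := -Complex.I) (by simp) y ξ)
  rw [hkernel.unique hwave, ← integral_smul_const]
  refine integral_congr_ae (.of_forall fun ξ => ?_)
  simp only [smul_mul_smul_comm, mul_one, smul_smul, ← Complex.exp_add]
  ring_nf

end Ball

/-! ### Integrability of kernel products -/

section KernelSize

attribute [local instance] clRing clComplexAlgebra clRealAlgebra clNormedSpace clIsScalarTower
  clFiniteDimensional clContinuousMul

lemma conj_AfunR (u : ℂ) (lam w z : ℝ) :
    starRingEnd ℂ (AfunR u lam w z) = AfunR (starRingEnd ℂ u) lam w z := by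
  simp [AfunR, Complex.conj_tsum]

lemma conj_BfunR (u : ℂ) (lam w z : ℝ) :
    starRingEnd ℂ (BfunR u lam w z) = BfunR (starRingEnd ℂ u) lam w z := by
  simp [BfunR, Complex.conj_tsum]

lemma conj_CfunR (u : ℂ) (lam w z : ℝ) :
    starRingEnd ℂ (CfunR u lam w z) = CfunR (starRingEnd ℂ u) lam w z := by
  simp [CfunR, Complex.conj_tsum]

lemma conj_I_pow_of_even (hme : Even m) : starRingEnd ℂ (Complex.I ^ m) = Complex.I ^ m := by
  rw [map_pow, Complex.conj_I, hme.neg_pow]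

/-- The real part of the scalar coefficient `A_λ + B_λ` of the kernel. -/
def kernelScalar (x y : Fin m → ℝ) : ℝ :=
  (AfunR (Complex.I ^ m) (((m : ℝ) - 2) / 2) (ip x y / (nrm x * nrm y)) (nrm x * nrm y)
    + BfunR (Complex.I ^ m) (((m : ℝ) - 2) / 2) (ip x y / (nrm x * nrm y)) (nrm x * nrm y)).re

/-- The real part of the bivector coefficient `C_λ` of the kernel. -/
def kernelBivector (x y : Fin m → ℝ) : ℝ :=
  (CfunR (Complex.I ^ m) (((m : ℝ) - 2) / 2) (ip x y / (nrm x * nrm y)) (nrm x * nrm y)).re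

lemma kernelScalar_comm (x y : Fin m → ℝ) : kernelScalar y x = kernelScalar x y := by
  rw [kernelScalar, kernelScalar, ip_comm, mul_comm (nrm y)]

lemma kernelBivector_comm (x y : Fin m → ℝ) : kernelBivector y x = kernelBivector x y := by
  rw [kernelBivector, kernelBivector, ip_comm, mul_comm (nrm y)]

lemma Kminus_eq (hme : Even m) (x y : Fin m → ℝ) :
    Kminus m x y = kernelScalar x y • 1 + kernelBivector x y • wedge m x y := by
  rw [← ofReal_smul, ← ofReal_smul, kernelScalar, kernelBivector,
    Complex.conj_eq_iff_re.1, Complex.conj_eq_iff_re.1, Kminus]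
  · rw [conj_CfunR, conj_I_pow_of_even hme]
  · rw [map_add, conj_AfunR, conj_BfunR, conj_I_pow_of_even hme]

/-- The squared length of the kernel, that is the scalar `K_-(x,y) K_-(y,x)`. -/
def kernelNormSq (x y : Fin m → ℝ) : ℝ :=
  kernelScalar x y ^ 2 + kernelBivector x y ^ 2 * (ip x x * ip y y - ip x y ^ 2)

lemma kernelNormSq_comm (x y : Fin m → ℝ) : kernelNormSq y x = kernelNormSq x y := by
  rw [kernelNormSq, kernelNormSq, kernelScalar_comm, kernelBivector_comm, ip_comm y x,
    mul_comm (ip y y)]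

lemma kernelNormSq_nonneg (x y : Fin m → ℝ) : 0 ≤ kernelNormSq x y :=
  add_nonneg (sq_nonneg _) (mul_nonneg (sq_nonneg _) (sub_nonneg.2 (ip_sq_le x y)))

lemma Kminus_mul_Kminus_swap (hme : Even m) (x y : Fin m → ℝ) :
    Kminus m x y * Kminus m y x = kernelNormSq x y • 1 := by
  rw [Kminus_eq hme, Kminus_eq hme y x, kernelScalar_comm x y, kernelBivector_comm x y,
    wedge_swap x y, kernelNormSq]
  simp only [mul_add, add_mul, smul_mul_assoc, mul_smul_comm, one_mul, mul_one, mul_neg,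
    smul_neg, wedge_mul_self]
  module

lemma sum_sum_sub_sq (x y : Fin m → ℝ) :
    ∑ j, ∑ k, (x j * y k - x k * y j) ^ 2 = 2 * (ip x x * ip y y - ip x y ^ 2) := by
  have hexpand (j k : Fin m) : (x j * y k - x k * y j) ^ 2
      = x j * x j * (y k * y k) - 2 * (x j * y j * (x k * y k)) + y j * y j * (x k * x k) := by
    ring
  simp only [hexpand, Finset.sum_add_distrib, Finset.sum_sub_distrib, ← Finset.mul_sum,
    ← Finset.sum_mul, ip]
  ring

lemma abs_sub_le_sqrt (x y : Fin m → ℝ) (j k : Fin m) :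
    |x j * y k - x k * y j| ≤ √(2 * (ip x x * ip y y - ip x y ^ 2)) := by
  refine Real.abs_le_sqrt ((sum_sum_sub_sq x y).symm ▸ ?_)
  calc (x j * y k - x k * y j) ^ 2 ≤ ∑ k, (x j * y k - x k * y j) ^ 2 :=
        Finset.single_le_sum (f := fun k => (x j * y k - x k * y j) ^ 2)
          (fun _ _ => sq_nonneg _) (Finset.mem_univ k)
    _ ≤ ∑ j, ∑ k, (x j * y k - x k * y j) ^ 2 :=
        Finset.single_le_sum (f := fun j => ∑ k, (x j * y k - x k * y j) ^ 2)
          (fun _ _ => Finset.sum_nonneg fun _ _ => sq_nonneg _) (Finset.mem_univ j)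

lemma norm_wedge_le (x y : Fin m → ℝ) :
    ‖wedge m x y‖ ≤ (∑ j, ∑ k, ‖e m j * e m k‖) * √(2 * (ip x x * ip y y - ip x y ^ 2)) := by
  simp only [wedge, Finset.sum_mul]
  refine (norm_sum_le _ _).trans (Finset.sum_le_sum fun j _ => ?_)
  refine (norm_sum_le _ _).trans (Finset.sum_le_sum fun k _ => ?_)
  split_ifs
  · rw [norm_smul, Complex.norm_real, Real.norm_eq_abs, mul_comm]
    exact mul_le_mul_of_nonneg_left (abs_sub_le_sqrt x y j k) (norm_nonneg _)
  · rw [norm_zero]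
    positivity

lemma exists_norm_Kminus_le (hme : Even m) :
    ∃ C, 0 ≤ C ∧ ∀ x y : Fin m → ℝ, ‖Kminus m x y‖ ≤ C * √(kernelNormSq x y) := by
  refine ⟨‖(1 : Cl m)‖ + (∑ j, ∑ k, ‖e m j * e m k‖) * √2, by positivity, fun x y => ?_⟩
  set q := ip x x * ip y y - ip x y ^ 2
  have hq_nonneg : 0 ≤ q := sub_nonneg.2 (ip_sq_le x y)
  have hscalar : |kernelScalar x y| ≤ √(kernelNormSq x y) :=
    Real.abs_le_sqrt (le_add_of_nonneg_right (mul_nonneg (sq_nonneg _) hq_nonneg))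
  have hbivector : |kernelBivector x y| * √q ≤ √(kernelNormSq x y) := by
    refine Real.le_sqrt_of_sq_le ?_
    rw [mul_pow, Real.sq_sqrt hq_nonneg, sq_abs]
    exact le_add_of_nonneg_left (sq_nonneg _)
  calc ‖Kminus m x y‖
      ≤ |kernelScalar x y| * ‖(1 : Cl m)‖ + |kernelBivector x y| * ‖wedge m x y‖ := by
        rw [Kminus_eq hme]
        exact (norm_add_le _ _).trans_eq (by simp only [norm_smul, Real.norm_eq_abs])
    _ ≤ |kernelScalar x y| * ‖(1 : Cl m)‖
          + |kernelBivector x y| * ((∑ j, ∑ k, ‖e m j * e m k‖) * (√2 * √q)) := by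
        gcongr
        exact (norm_wedge_le x y).trans_eq (by rw [Real.sqrt_mul zero_le_two])
    _ = |kernelScalar x y| * ‖(1 : Cl m)‖
          + (∑ j, ∑ k, ‖e m j * e m k‖) * √2 * (|kernelBivector x y| * √q) := by ring
    _ ≤ √(kernelNormSq x y) * ‖(1 : Cl m)‖
          + (∑ j, ∑ k, ‖e m j * e m k‖) * √2 * √(kernelNormSq x y) := by gcongr
    _ = _ := by ring

lemma exists_norm_Kminus_mul_Kminus_le (hme : Even m) :
    ∃ C, ∀ x y ξ : Fin m → ℝ,
      ‖Kminus m ξ x * Kminus m y ξ‖ ≤ C * (kernelNormSq ξ x + kernelNormSq ξ y) := by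
  obtain ⟨C, hC, hK⟩ := exists_norm_Kminus_le hme
  refine ⟨‖mulCLM (m := m)‖ * C ^ 2, fun x y ξ => ?_⟩
  have hsqrt : √(kernelNormSq ξ x) * √(kernelNormSq ξ y)
      ≤ kernelNormSq ξ x + kernelNormSq ξ y := by
    rw [← Real.sqrt_mul (kernelNormSq_nonneg ξ x)]
    refine Real.sqrt_le_iff.2 ⟨add_nonneg (kernelNormSq_nonneg _ _) (kernelNormSq_nonneg _ _), ?_⟩
    nlinarith [kernelNormSq_nonneg ξ x, kernelNormSq_nonneg ξ y]
  calc ‖Kminus m ξ x * Kminus m y ξ‖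
      ≤ ‖mulCLM (m := m)‖ * ‖Kminus m ξ x‖ * ‖Kminus m y ξ‖ := norm_mul_le_mulCLM _ _
    _ ≤ ‖mulCLM (m := m)‖ * (C * √(kernelNormSq ξ x)) * (C * √(kernelNormSq ξ y)) := by
        gcongr
        · exact hK ξ x
        · exact kernelNormSq_comm ξ y ▸ hK y ξ
    _ = ‖mulCLM (m := m)‖ * C ^ 2 * (√(kernelNormSq ξ x) * √(kernelNormSq ξ y)) := by ring
    _ ≤ _ := by gcongr

variable {n : ℕ}

lemma continuous_Kminus_mul_Kminus (hm : m = 2 * n + 2) (x y : Fin m → ℝ) :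
    Continuous fun ξ => Kminus m ξ x * Kminus m y ξ :=
  (continuous_Kminus hm).along_fst.mul (continuous_Kminus hm).along_snd

lemma even_of_eq (hm : m = 2 * n + 2) : Even m := ⟨n + 1, by omega⟩

lemma coeff_real_smul_one (r : ℝ) : coeff (r • (1 : Cl m)) ∅ = r := by
  simp [coeff_real_smul, coeff_one]

lemma continuous_kernelNormSq (hm : m = 2 * n + 2) (x : Fin m → ℝ) :
    Continuous fun ξ => kernelNormSq ξ x := by
  have hcoeff (ξ : Fin m → ℝ) :
      kernelNormSq ξ x = (coeff (Kminus m ξ x * Kminus m x ξ) ∅).re := by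
    rw [Kminus_mul_Kminus_swap (even_of_eq hm), coeff_real_smul_one, Complex.ofReal_re]
  simp only [hcoeff]
  exact Complex.continuous_re.comp
    ((continuous_apply (∅ : Finset (Fin m))).comp (continuous_Kminus_mul_Kminus hm x x))

lemma setIntegral_mul_kernelNormSq (hm : m = 2 * n + 2) {g : (Fin m → ℝ) → ℝ}
    (hrad : IsRadial g) {R : ℝ} (hint : IntegrableOn g (solidBall m R)) (x : Fin m → ℝ) :
    ∫ ξ in solidBall m R, g ξ * kernelNormSq ξ x = ∫ ξ in solidBall m R, g ξ := by
  have hkernel := setIntegral_smul_Kminus_mul_Kminus hm (h := fun ξ => (g ξ : ℂ))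
    (fun ξ η hξη => congrArg _ (hrad ξ η hξη)) hint.ofReal x x
  simp only [Kminus_mul_Kminus_swap (even_of_eq hm), ip_comm x, sub_self, mul_zero,
    Complex.exp_zero, mul_one, ofReal_smul, smul_smul, integral_smul_const,
    integral_complex_ofReal] at hkernel
  simpa [coeff_real_smul_one] using congrArg (coeff · ∅) hkernel

lemma aecover_solidBall : AECover volume Filter.atTop fun i : ℕ => solidBall m i where
  ae_eventually_mem := .of_forall fun ξ => by
    filter_upwards [Filter.eventually_ge_atTop ⌈ip ξ ξ⌉₊] with i hi
    exact Nat.ceil_le.1 hi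
  measurableSet i := measurableSet_solidBall i

variable {h : (Fin m → ℝ) → ℂ}

lemma integrable_norm_mul_kernelNormSq (hm : m = 2 * n + 2) (hrad : IsRadial h)
    (hint : Integrable h) (x : Fin m → ℝ) :
    Integrable fun ξ => ‖h ξ‖ * kernelNormSq ξ x := by
  refine aecover_solidBall.integrable_of_integral_bounded_of_nonneg_ae (∫ ξ, ‖h ξ‖) (fun i => ?_)
    (.of_forall fun ξ => mul_nonneg (norm_nonneg _) (kernelNormSq_nonneg ξ x))
    (.of_forall fun i => ?_)
  · exact hint.norm.integrableOn.mul_continuousOn (continuous_kernelNormSq hm x).continuousOn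
      (isCompact_solidBall i)
  · rw [setIntegral_mul_kernelNormSq hm (fun ξ η hξη => congrArg _ (hrad ξ η hξη))
      hint.norm.integrableOn]
    exact setIntegral_le_integral hint.norm (.of_forall fun ξ => norm_nonneg _)

lemma integrable_smul_Kminus_mul_Kminus (hm : m = 2 * n + 2) (hrad : IsRadial h)
    (hint : Integrable h) (x y : Fin m → ℝ) :
    Integrable fun ξ => h ξ • (Kminus m ξ x * Kminus m y ξ) := by
  obtain ⟨C, hC⟩ := exists_norm_Kminus_mul_Kminus_le (even_of_eq hm)
  refine (((integrable_norm_mul_kernelNormSq hm hrad hint x).add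
    (integrable_norm_mul_kernelNormSq hm hrad hint y)).const_mul C).mono'
    (hint.aestronglyMeasurable.smul
      (continuous_Kminus_mul_Kminus hm x y).aestronglyMeasurable) (.of_forall fun ξ => ?_)
  calc ‖h ξ • (Kminus m ξ x * Kminus m y ξ)‖
      ≤ ‖h ξ‖ * (C * (kernelNormSq ξ x + kernelNormSq ξ y)) := by
        rw [norm_smul]
        exact mul_le_mul_of_nonneg_left (hC x y ξ) (norm_nonneg _)
    _ = C * (‖h ξ‖ * kernelNormSq ξ x + ‖h ξ‖ * kernelNormSq ξ y) := by ring

lemma integrable_mul_exp_I_mul (hint : Integrable h) {φ : (Fin m → ℝ) → ℝ} (hφ : Continuous φ) :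
    Integrable fun ξ => h ξ * Complex.exp (Complex.I * φ ξ) :=
  hint.mul_bdd (c := 1) (by fun_prop)
    (.of_forall fun ξ => by rw [mul_comm, Complex.norm_exp_ofReal_mul_I])

theorem integral_smul_Kminus_mul_Kminus (hm : m = 2 * n + 2) (hrad : IsRadial h)
    (hint : Integrable h) (x y : Fin m → ℝ) :
    ∫ ξ, h ξ • (Kminus m ξ x * Kminus m y ξ)
      = (∫ ξ, h ξ * Complex.exp (Complex.I * (ip ξ x - ip y ξ))) • (1 : Cl m) := by
  have hphase : Continuous fun ξ => ip ξ x - ip y ξ :=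
    continuous_ip.along_fst.sub continuous_ip.along_snd
  have hwave := integrable_mul_exp_I_mul hint hphase
  simp only [Complex.ofReal_sub] at hwave
  refine tendsto_nhds_unique (aecover_solidBall.integral_tendsto_of_countably_generated
    (integrable_smul_Kminus_mul_Kminus hm hrad hint x y)) ?_
  simp only [setIntegral_smul_Kminus_mul_Kminus hm hrad hint.integrableOn]
  exact (aecover_solidBall.integral_tendsto_of_countably_generated hwave).smul_const _

end KernelSize

/-! ### Fourier inversion -/

section Fourier

open FourierTransform

/-- A function on `ℝ^m` viewed as a complex Schwartz function on Euclidean space, which is where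
the Fourier transform is available. -/
def euclideanLift (f : SchwartzMap (Fin m → ℝ) ℝ) : SchwartzMap (EuclideanSpace ℝ (Fin m)) ℂ :=
  SchwartzMap.postcompCLM Complex.ofRealCLM (SchwartzMap.compCLMOfContinuousLinearEquiv ℝ
    (PiLp.continuousLinearEquiv 2 ℝ fun _ : Fin m => ℝ) f)

lemma euclideanLift_apply (f : SchwartzMap (Fin m → ℝ) ℝ) (v : EuclideanSpace ℝ (Fin m)) :
    euclideanLift f v = f v.ofLp := rfl

lemma inner_eq_ip (v w : EuclideanSpace ℝ (Fin m)) : inner ℝ v w = ip v.ofLp w.ofLp :=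
  inner_toLp v.ofLp w.ofLp

lemma integral_ofLp (G : (Fin m → ℝ) → ℂ) :
    ∫ v : EuclideanSpace ℝ (Fin m), G v.ofLp = ∫ v, G v :=
  (PiLp.volume_preserving_ofLp (Fin m)).integral_comp
    (MeasurableEquiv.toLp 2 (Fin m → ℝ)).symm.measurableEmbedding G

/-- The unnormalized Fourier integral `∫ f(v) e^{i⟨v,ξ⟩} dv`. -/
def waveIntegral (f : (Fin m → ℝ) → ℂ) (ξ : Fin m → ℝ) : ℂ :=
  ∫ v, f v * Complex.exp (Complex.I * ip v ξ)

lemma waveIntegral_ofLp (f : SchwartzMap (Fin m → ℝ) ℝ) (w : EuclideanSpace ℝ (Fin m)) :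
    waveIntegral (fun v => f v) w.ofLp = 𝓕⁻ (euclideanLift f) ((2 * Real.pi)⁻¹ • w) := by
  rw [waveIntegral, SchwartzMap.fourierInv_coe, Real.fourierInv_eq', ← integral_ofLp]
  refine integral_congr_ae (.of_forall fun v => ?_)
  have hphase : 2 * Real.pi * inner ℝ v ((2 * Real.pi)⁻¹ • w) = ip v.ofLp w.ofLp := by
    rw [inner_smul_right, inner_eq_ip, mul_inv_cancel_left₀ (by positivity)]
  simp only [hphase, euclideanLift_apply, smul_eq_mul]
  rw [mul_comm, mul_comm Complex.I]

lemma integrable_waveIntegral (f : SchwartzMap (Fin m → ℝ) ℝ) :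
    Integrable (waveIntegral fun v => (f v : ℂ)) := by
  rw [← (PiLp.volume_preserving_ofLp (Fin m)).integrable_comp_emb
    (MeasurableEquiv.toLp 2 (Fin m → ℝ)).symm.measurableEmbedding]
  refine ((𝓕⁻ (euclideanLift f)).integrable.comp_smul (R := (2 * Real.pi)⁻¹) (by positivity)).congr
    (.of_forall fun w => (waveIntegral_ofLp f w).symm)

lemma integral_waveIntegral_mul_exp (f : SchwartzMap (Fin m → ℝ) ℝ) (u : Fin m → ℝ) :
    ∫ ξ, waveIntegral (fun v => (f v : ℂ)) ξ * Complex.exp (-(Complex.I * ip u ξ))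
      = (2 * Real.pi) ^ m * f u := by
  let F : EuclideanSpace ℝ (Fin m) → ℂ := fun v =>
    Complex.exp (↑(-2 * Real.pi * inner ℝ v (WithLp.toLp 2 u)) * Complex.I)
      • 𝓕⁻ (euclideanLift f) v
  have hscale (w : EuclideanSpace ℝ (Fin m)) :
      waveIntegral (fun v => (f v : ℂ)) w.ofLp * Complex.exp (-(Complex.I * ip u w.ofLp))
        = F ((2 * Real.pi)⁻¹ • w) := by
    have hphase : -2 * Real.pi * inner ℝ ((2 * Real.pi)⁻¹ • w) (WithLp.toLp 2 u)
        = -ip u w.ofLp := by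
      rw [real_inner_smul_left, inner_eq_ip, ip_comm, neg_mul, neg_mul,
        mul_inv_cancel_left₀ (by positivity)]
    simp only [F, hphase, waveIntegral_ofLp, smul_eq_mul]
    rw [mul_comm, Complex.ofReal_neg, neg_mul, mul_comm Complex.I]
  have hinversion : ∫ v, F v = f u := by
    rw [← Real.fourier_eq', ← SchwartzMap.fourier_coe, fourier_fourierInv_eq, euclideanLift_apply]
  rw [← integral_ofLp]
  simp only [hscale]
  rw [Measure.integral_comp_smul, hinversion, finrank_euclideanSpace_fin, inv_pow, inv_inv,
    abs_of_pos (by positivity), Complex.real_smul]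
  push_cast
  rfl

/-- Points of equal length are exchanged by a reflection, and the Fourier transform commutes with
linear isometries. -/
lemma IsRadial.waveIntegral {f : SchwartzMap (Fin m → ℝ) ℝ} (hf : IsRadial f) :
    IsRadial (waveIntegral fun v => (f v : ℂ)) := by
  intro ξ η hξη
  let v := (2 * Real.pi)⁻¹ • WithLp.toLp 2 ξ
  let w := (2 * Real.pi)⁻¹ • WithLp.toLp 2 η
  let A := Submodule.reflection (ℝ ∙ (v - w))ᗮ
  have hA : A v = w := Submodule.reflection_sub (by
    simp only [v, w, norm_smul, norm_toLp, nrm, hξη])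
  have hlift : euclideanLift f ∘ A = euclideanLift f := by
    refine funext fun z => congrArg Complex.ofReal (hf _ _ ?_)
    exact (inner_eq_ip (A z) (A z)).symm.trans ((A.inner_map_map z z).trans (inner_eq_ip z z))
  have hcomp := Real.fourierInv_comp_linearIsometry A (euclideanLift f) v
  rw [hA, hlift, ← SchwartzMap.fourierInv_coe] at hcomp
  exact (waveIntegral_ofLp f (WithLp.toLp 2 ξ)).trans
    (hcomp.trans (waveIntegral_ofLp f (WithLp.toLp 2 η)).symm)

end Fourier

/-! ### The translation of a radial function -/

section Translation

attribute [local instance] clRing clComplexAlgebra clRealAlgebra clNormedSpace clIsScalarTower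
  clFiniteDimensional clContinuousMul

lemma coeff_cconj (a : Cl m) (S : Finset (Fin m)) :
    coeff (cconj a) S = starRingEnd ℂ (coeff a S) := rfl

lemma cconj_add (a b : Cl m) : cconj (a + b) = cconj a + cconj b :=
  Cl.ext fun S => by simp only [coeff_cconj, coeff_add, map_add]

lemma cconj_zero : cconj (0 : Cl m) = 0 :=
  Cl.ext fun S => by simp only [coeff_cconj, coeff_zero, map_zero]

lemma cconj_smul (c : ℂ) (a : Cl m) : cconj (c • a) = starRingEnd ℂ c • cconj a :=
  Cl.ext fun S => by simp only [coeff_cconj, coeff_smul, map_mul]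

lemma cconj_sum {ι : Type*} (s : Finset ι) (F : ι → Cl m) :
    cconj (∑ i ∈ s, F i) = ∑ i ∈ s, cconj (F i) :=
  map_sum (AddMonoidHom.mk' cconj cconj_add) F s

lemma cconj_basisElem (S : Finset (Fin m)) : cconj (basisElem S) = basisElem S :=
  Cl.ext fun T => by
    simp only [coeff_cconj, coeff_basisElem, apply_ite (starRingEnd ℂ), map_one, map_zero]

lemma conj_basisSign (S T : Finset (Fin m)) :
    starRingEnd ℂ (basisSign S T) = basisSign S T := by
  simp only [basisSign, map_prod, apply_ite (starRingEnd ℂ), map_neg, map_one]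

lemma cconj_e_mul_e (j k : Fin m) : cconj (e m j * e m k) = e m j * e m k := by
  rw [show e m j * e m k = _ from basisElem_mul {j} {k}, cconj_smul, conj_basisSign,
    cconj_basisElem]

lemma cconj_wedge (x y : Fin m → ℝ) : cconj (wedge m x y) = wedge m x y := by
  simp only [wedge, cconj_sum, apply_ite cconj, cconj_smul, cconj_e_mul_e, cconj_zero,
    Complex.conj_ofReal]

lemma cconj_Kminus (hme : Even m) (x y : Fin m → ℝ) : cconj (Kminus m x y) = Kminus m x y := by
  have cconj_one : cconj (1 : Cl m) = 1 := cconj_basisElem ∅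
  rw [Kminus, cconj_add, cconj_smul, cconj_smul, cconj_one, cconj_wedge, map_add, conj_AfunR,
    conj_BfunR, conj_CfunR, conj_I_pow_of_even hme]

lemma besselJt_zero_right (a : ℝ) : besselJt a 0 = (Real.Gamma (a + 1) * 2 ^ a)⁻¹ := by
  rw [besselJt, tsum_eq_single 0 fun j hj => by simp [hj]]
  simp

lemma AfunR_zero_right (u : ℂ) (lam w : ℝ) :
    AfunR u lam w 0
      = ↑((2 : ℝ) ^ (lam - 1) * Real.Gamma (lam + 1)) * (u + 1) * besselJt lam 0 := by
  rw [AfunR, tsum_eq_single 0 fun k hk => by simp [hk]]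
  simp [geg, mul_assoc]

lemma BfunR_zero_right (u : ℂ) (lam w : ℝ) :
    BfunR u lam w 0
      = -↑((2 : ℝ) ^ (lam - 1) * Real.Gamma (lam + 1)) * (u - 1) * besselJt lam 0 := by
  rw [BfunR, tsum_eq_single 0 fun k hk => by simp [hk]]
  simp [gegT, geg, mul_assoc]

lemma AfunR_add_BfunR_zero_right (u : ℂ) {lam : ℝ} (hlam : 0 < lam + 1) (w : ℝ) :
    AfunR u lam w 0 + BfunR u lam w 0 = 1 := by
  have hGamma : (Real.Gamma (lam + 1) : ℂ) ≠ 0 :=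
    Complex.ofReal_ne_zero.2 (Real.Gamma_pos_of_pos hlam).ne'
  have hpow : (((2 : ℝ) ^ lam : ℝ) : ℂ) ≠ 0 := Complex.ofReal_ne_zero.2 (by positivity)
  rw [AfunR_zero_right, BfunR_zero_right, besselJt_zero_right, Real.rpow_sub_one two_ne_zero]
  simp only [Complex.ofReal_mul, Complex.ofReal_div, Complex.ofReal_inv, Complex.ofReal_ofNat]
  field_simp
  ring

lemma Kminus_zero_left (hm : 0 < m) (y : Fin m → ℝ) : Kminus m 0 y = 1 := by
  have hnrm : nrm (0 : Fin m → ℝ) = 0 := by simp [nrm, ip]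
  have hwedge : wedge m 0 y = 0 := by simp [wedge]
  have hm' : (0 : ℝ) < m := Nat.cast_pos.2 hm
  rw [Kminus, hnrm, zero_mul, hwedge, smul_zero, add_zero,
    AfunR_add_BfunR_zero_right _ (by linarith), one_smul]

variable {n : ℕ}

lemma Fm_smul_one (hm : m = 2 * n + 2) {f : (Fin m → ℝ) → ℝ} (hf : IsRadial f)
    (hint : Integrable f) (ξ : Fin m → ℝ) :
    Fm m (fun v => f v • (1 : Cl m)) ξ
      = ((2 * Real.pi) ^ (-(m : ℝ) / 2) : ℝ) • waveIntegral (fun v => f v) ξ • (1 : Cl m) := by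
  have hkernel := integral_smul_Kminus_mul_Kminus hm (h := fun v => (f v : ℂ))
    (fun v w hvw => congrArg _ (hf v w hvw)) hint.ofReal ξ 0
  have hip (v : Fin m → ℝ) : ip 0 v = 0 := by simp [ip]
  simp only [Kminus_zero_left (m := m) (by omega), hip, Complex.ofReal_zero, sub_zero, mul_one,
    ofReal_smul] at hkernel
  rw [Fm, waveIntegral, ← hkernel]
  simp only [mul_smul_comm, mul_one]

lemma integral_waveIntegral_mul_exp_sub (f : SchwartzMap (Fin m → ℝ) ℝ) (x y : Fin m → ℝ) :
    ∫ ξ, waveIntegral (fun v => (f v : ℂ)) ξ * Complex.exp (Complex.I * (ip ξ x - ip y ξ))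
      = (2 * Real.pi) ^ m * f (y - x) := by
  rw [← integral_waveIntegral_mul_exp]
  refine integral_congr_ae (.of_forall fun ξ => ?_)
  have hip : ip (y - x) ξ = ip y ξ - ip ξ x := by
    rw [ip_comm ξ x]
    exact sub_dotProduct y x ξ
  simp only [hip, Complex.ofReal_sub]
  ring_nf

lemma rpow_neg_half_sq_mul_pow {a : ℝ} (ha : 0 < a) (m : ℕ) :
    a ^ (-(m : ℝ) / 2) * (a ^ (-(m : ℝ) / 2) * a ^ m) = 1 := by
  rw [← Real.rpow_natCast, ← Real.rpow_add ha, ← Real.rpow_add ha]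
  ring_nf
  exact Real.rpow_zero a

theorem tau_smul_one (hm : m = 2 * n + 2) {f : SchwartzMap (Fin m → ℝ) ℝ} (hf : IsRadial f)
    (x y : Fin m → ℝ) : tau m (fun v => f v • (1 : Cl m)) y x = f (x - y) • (1 : Cl m) := by
  have hswap : f (y - x) = f (x - y) := hf _ _ (Finset.sum_congr rfl fun i _ => by
    simp only [Pi.sub_apply]
    ring)
  have hintegrand (ξ : Fin m → ℝ) :
      cconj (Kminus m ξ x) * (Kminus m y ξ * Fm m (fun v => f v • (1 : Cl m)) ξ)
        = ((2 * Real.pi) ^ (-(m : ℝ) / 2) : ℝ)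
          • waveIntegral (fun v => f v) ξ • (Kminus m ξ x * Kminus m y ξ) := by
    rw [cconj_Kminus (even_of_eq hm), Fm_smul_one hm hf f.integrable]
    simp only [mul_smul_comm, mul_one]
  rw [tau]
  simp only [hintegrand]
  rw [integral_smul, integral_smul_Kminus_mul_Kminus hm hf.waveIntegral (integrable_waveIntegral f),
    integral_waveIntegral_mul_exp_sub, hswap]
  have hcast : ((2 * Real.pi) ^ m * f (x - y) : ℂ) = ((2 * Real.pi) ^ m * f (x - y) : ℝ) := by
    push_cast
    rfl
  rw [hcast, ofReal_smul, smul_smul, smul_smul]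
  congr 1
  linear_combination f (x - y) * rpow_neg_half_sq_mul_pow Real.two_pi_pos m

end Translation

/-- For even `m`, the generalized translation operator associated with the
Clifford-Fourier transform coincides with the classical translation on real-valued
radial Schwartz functions: `τ_y f(x) = f₀(|x-y|)` when `f(x) = f₀(|x|)`. -/
theorem generalized_translation_radial (m : ℕ) (hme : Even m) (hm : 2 ≤ m)
    (f₀ : ℝ → ℝ) (f : SchwartzMap (Fin m → ℝ) ℝ) (hrad : ∀ x, f x = f₀ (nrm x))
    (x y : Fin m → ℝ) :
    tau m (fun v => f v • (1 : Cl m)) y x = f₀ (nrm (x - y)) • (1 : Cl m) := by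
  obtain ⟨k, hk⟩ := hme
  have hradial : IsRadial f := fun v w hvw => by rw [hrad, hrad, nrm, nrm, hvw]
  rw [tau_smul_one (n := k - 1) (by omega) hradial, hrad]

end CliffordFourier
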